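/- arXiv:2204.07785 — 2 statements merged into one kernel-verified Lean document; each statement's English description precedes it below -/
import Mathlib

section
/- There exists δ > 0 such that for all real u, v, w with |u|, |v|, |w| < δ, the series ∑_{k ≥ n+s, n ≥ s ≥ 1} G_0(k,n,s) u^{k−n−s} v^{n−s} w^{s−1} converges absolutely and equals (1/(1−u)) · ₃F₂(α, β, 1; (3−u)/2, 3/2; 1), where α and β are the two (possibly complex) roots of the quadratic X² − (1 − u/2 + v/2)X + (1 − u + v − uv + w)/4 = 0 (i.e. α + β = 1 − u/2 + v/2 and αβ = (1 − u + v − uv + w)/4). -/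
open scoped BigOperators

/-- The multiple `t`-value of an index `K = (k₁, …, kₙ)` (a list of positive integers):
`t(K) = ∑_{m₁ > ⋯ > mₙ > 0, all mᵢ odd} 1 / (m₁^{k₁} ⋯ mₙ^{kₙ})`. -/
noncomputable def multT (K : List ℕ) : ℝ :=
  ∑' m : Fin K.length → ℕ,
    if (∀ i, Odd (m i)) ∧ (∀ i j : Fin K.length, i < j → m j < m i) then
      ∏ i, ((m i : ℝ) ^ K.get i)⁻¹
    else 0

/-- The multiple `t`-star value of an index `K = (k₁, …, kₙ)`:
`t*(K) = ∑_{m₁ ≥ ⋯ ≥ mₙ > 0, all mᵢ odd} 1 / (m₁^{k₁} ⋯ mₙ^{kₙ})`. -/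
noncomputable def multTStar (K : List ℕ) : ℝ :=
  ∑' m : Fin K.length → ℕ,
    if (∀ i, Odd (m i)) ∧ (∀ i j : Fin K.length, i < j → m j ≤ m i) then
      ∏ i, ((m i : ℝ) ^ K.get i)⁻¹
    else 0

/-- An index (list of positive integers) is admissible if its first entry is `> 1`. -/
def Admissible (K : List ℕ) : Prop := (∀ i ∈ K, 1 ≤ i) ∧ 2 ≤ K.headI

instance : DecidablePred Admissible := fun K =>
  inferInstanceAs (Decidable ((∀ i ∈ K, 1 ≤ i) ∧ 2 ≤ K.headI))

/-- `G0h k n s` is the sum of multiple `t`-values over all admissible indices of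
weight `k`, depth `n` and height `s`. -/
noncomputable def G0h (k n s : ℕ) : ℝ :=
  ∑' K : List ℕ,
    if Admissible K ∧ K.sum = k ∧ K.length = n ∧
        K.countP (fun i => decide (2 ≤ i)) = s then
      multT K
    else 0

/-- `G0hStar k n s` is the sum of multiple `t`-star values over all admissible indices of
weight `k`, depth `n` and height `s`. -/
noncomputable def G0hStar (k n s : ℕ) : ℝ :=
  ∑' K : List ℕ,
    if Admissible K ∧ K.sum = k ∧ K.length = n ∧
        K.countP (fun i => decide (2 ≤ i)) = s then
      multTStar K
    else 0

/-- `G0d k n` is the sum of multiple `t`-values over all admissible indices of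
weight `k` and depth `n`. -/
noncomputable def G0d (k n : ℕ) : ℝ :=
  ∑' K : List ℕ,
    if Admissible K ∧ K.sum = k ∧ K.length = n then multT K else 0

/-- `G0dStar k n` is the sum of multiple `t`-star values over all admissible indices of
weight `k` and depth `n`. -/
noncomputable def G0dStar (k n : ℕ) : ℝ :=
  ∑' K : List ℕ,
    if Admissible K ∧ K.sum = k ∧ K.length = n then multTStar K else 0

/-- The single `t`-value `t(n) = ∑_{m odd, m > 0} 1 / m^n`. -/
noncomputable def tval (n : ℕ) : ℝ := ∑' m : ℕ, 1 / (2 * (m : ℝ) + 1) ^ n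

/-- The ascending Pochhammer symbol `(a)ₙ = a (a+1) ⋯ (a+n-1)`. -/
noncomputable def poch (a : ℂ) (n : ℕ) : ℂ := ∏ i ∈ Finset.range n, (a + i)

/-- The generalized hypergeometric function `₃F₂(a, b, c; d, e; z)`. -/
noncomputable def hyp3F2 (a b c d e z : ℂ) : ℂ :=
  ∑' n : ℕ, poch a n * poch b n * poch c n /
      ((n.factorial : ℂ) * poch d n * poch e n) * z ^ n

/-- The generalized hypergeometric function with upper parameters `as` and lower
parameters `bs`. -/
noncomputable def hypF (as bs : List ℂ) (z : ℂ) : ℂ :=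
  ∑' n : ℕ, (as.map fun a => poch a n).prod /
      ((n.factorial : ℂ) * (bs.map fun b => poch b n).prod) * z ^ n

/-- The one-variable multiple polylogarithm
`L_K(z) = ∑_{m₁ > ⋯ > mₙ > 0, all mᵢ odd} z^{m₁} / (m₁^{k₁} ⋯ mₙ^{kₙ})`. -/
noncomputable def Lt (K : List ℕ) (z : ℝ) : ℝ :=
  ∑' m : Fin K.length → ℕ,
    if h : (∀ i, Odd (m i)) ∧ (∀ i j : Fin K.length, i < j → m j < m i) ∧
        0 < K.length then
      z ^ (m ⟨0, h.2.2⟩) * ∏ i, ((m i : ℝ) ^ K.get i)⁻¹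
    else 0

/-- The one-variable star multiple polylogarithm
`L*_K(z) = ∑_{m₁ ≥ ⋯ ≥ mₙ > 0, all mᵢ odd} z^{m₁} / (m₁^{k₁} ⋯ mₙ^{kₙ})`. -/
noncomputable def LtStar (K : List ℕ) (z : ℝ) : ℝ :=
  ∑' m : Fin K.length → ℕ,
    if h : (∀ i, Odd (m i)) ∧ (∀ i j : Fin K.length, i < j → m j ≤ m i) ∧
        0 < K.length then
      z ^ (m ⟨0, h.2.2⟩) * ∏ i, ((m i : ℝ) ^ K.get i)⁻¹
    else 0

/-- `G0hz k n s z` is the sum of `L_K(z)` over all admissible indices `K` of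
weight `k`, depth `n` and height `s`. -/
noncomputable def G0hz (k n s : ℕ) (z : ℝ) : ℝ :=
  ∑' K : List ℕ,
    if Admissible K ∧ K.sum = k ∧ K.length = n ∧
        K.countP (fun i => decide (2 ≤ i)) = s then
      Lt K z
    else 0

/-- `G0hzStar k n s z` is the sum of `L*_K(z)` over all admissible indices `K` of
weight `k`, depth `n` and height `s`. -/
noncomputable def G0hzStar (k n s : ℕ) (z : ℝ) : ℝ :=
  ∑' K : List ℕ,
    if Admissible K ∧ K.sum = k ∧ K.length = n ∧
        K.countP (fun i => decide (2 ≤ i)) = s then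
      LtStar K z
    else 0

/-!
Give an admissible index the monomial it carries in the generating function. This monomial is
multiplicative over the entries: a leading entry `k ≥ 2` contributes `u^{k-2}`, and a later entry
contributes `v` if it is `1` and `w u^{k-2}` if it is `k ≥ 2`. Summing over all entries before
summing over `m₁ > ⋯ > mₙ` therefore turns the generating function into
`∑ᵢ 1/((2i+1)(2i+1-u)) ∏_{j<i} (1 + v/(2j+1) + w/((2j+1)(2j+1-u)))`, where the factor at `j` records
whether, and with which exponent, the odd number `2j+1` occurs among `m₂, …, mₙ`. This factor
equals `(α+j)(β+j)/((1/2+j)((1-u)/2+j))`, so the sum is a hypergeometric series.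
-/

section InfiniteSums

variable {α β ι : Type*}

theorem hasSum_prod_of_nonneg {f : α × β → ℝ} {g : α → ℝ} {s : ℝ} (hf₀ : ∀ p, 0 ≤ f p)
    (hf : ∀ a, HasSum (fun b => f (a, b)) (g a)) (hg : HasSum g s) : HasSum f s := by
  have hsum : Summable f := (summable_prod_of_nonneg hf₀).2
    ⟨fun a => (hf a).summable, by simpa only [(hf _).tsum_eq] using hg.summable⟩
  exact hsum.hasSum_iff.2 ((hsum.hasSum.prod_fiberwise hf).unique hg)

-- If `g` is not summable, neither is `f`, and both sides are `0` by convention.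
theorem tsum_prod_of_nonneg {f : α × β → ℝ} {g : α → ℝ} (hf₀ : ∀ p, 0 ≤ f p)
    (hf : ∀ a, HasSum (fun b => f (a, b)) (g a)) : ∑' p, f p = ∑' a, g a := by
  by_cases hg : Summable g
  · exact (hasSum_prod_of_nonneg hf₀ hf hg.hasSum).tsum_eq
  · rw [tsum_eq_zero_of_not_summable hg, tsum_eq_zero_of_not_summable]
    exact fun h => hg (h.hasSum.prod_fiberwise hf).summable

theorem hasSum_vecCons_of_nonneg {n : ℕ} {f : (Fin (n + 1) → α) → ℝ} {g : α → ℝ} {s : ℝ}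
    (hf₀ : ∀ m, 0 ≤ f m) (hf : ∀ a, HasSum (fun m => f (Matrix.vecCons a m)) (g a))
    (hg : HasSum g s) : HasSum f s :=
  (Fin.consEquiv fun _ => α).hasSum_iff.1 <| hasSum_prod_of_nonneg (fun _ => hf₀ _) hf hg

theorem tsum_vecCons_of_nonneg {n : ℕ} {f : (Fin (n + 1) → α) → ℝ} {g : α → ℝ}
    (hf₀ : ∀ m, 0 ≤ f m) (hf : ∀ a, HasSum (fun m => f (Matrix.vecCons a m)) (g a)) :
    ∑' m, f m = ∑' a, g a := by
  rw [← (Fin.consEquiv fun _ => α).tsum_eq]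
  exact tsum_prod_of_nonneg (fun _ => hf₀ _) hf

theorem summable_of_eventually_le_sub_succ {a b : ℕ → ℝ} (ha : ∀ n, 0 ≤ a n) (hb : ∀ n, 0 ≤ b n)
    (h : ∀ᶠ n in Filter.atTop, a n ≤ b n - b (n + 1)) : Summable a := by
  obtain ⟨N, hN⟩ := Filter.eventually_atTop.1 h
  refine (summable_nat_add_iff N).1 <|
    summable_of_sum_range_le (c := b N) (fun n => ha (n + N)) fun n => ?_
  calc ∑ i ∈ Finset.range n, a (i + N)
      ≤ ∑ i ∈ Finset.range n, (b (i + N) - b (i + 1 + N)) :=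
        Finset.sum_le_sum fun i _ => by simpa only [add_right_comm] using hN (i + N) (by omega)
    _ = b N - b (n + N) := by
        simpa using Finset.sum_range_sub' (fun i => b (i + N)) n
    _ ≤ b N := sub_le_self _ (hb _)

theorem hasSum_mul_of_rclike {𝕜 : Type*} [RCLike 𝕜] {f : α → 𝕜} {g : β → 𝕜} {s t : 𝕜}
    (hf : HasSum f s) (hg : HasSum g t) : HasSum (fun p : α × β => f p.1 * g p.2) (s * t) :=
  hf.mul hg (summable_mul_of_summable_norm hf.summable.norm hg.summable.norm)

theorem hasSum_list_iff {M : Type*} [AddCommMonoid M] [TopologicalSpace M] {f : List ι → M}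
    (hf : f [] = 0) {s : M} : HasSum (fun p : ι × List ι => f (p.1 :: p.2)) s ↔ HasSum f s := by
  refine Function.Injective.hasSum_iff (g := fun p : ι × List ι => p.1 :: p.2) ?_ ?_
  · rintro ⟨a, K⟩ ⟨b, L⟩ h
    simpa using h
  · rintro (_ | ⟨a, K⟩) hK
    · exact hf
    · exact absurd ⟨(a, K), rfl⟩ hK

end InfiniteSums

/-- The nested sum `∑_{N > i₁ > ⋯ > iₙ ≥ 0} x a₁ i₁ ⋯ x aₙ iₙ` attached to a word
`[a₁, …, aₙ]`, by recursion on the word; the empty word gives `1`. -/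
def nestedSum {ι R : Type*} [Semiring R] (x : ι → ℕ → R) : List ι → ℕ → R
  | [], _ => 1
  | a :: K, N => ∑ i ∈ Finset.range N, x a i * nestedSum x K i

namespace nestedSum

variable {ι : Type*}

section Semiring

variable {R : Type*} [Semiring R]

theorem nil (x : ι → ℕ → R) (N : ℕ) : nestedSum x [] N = 1 := rfl

theorem cons (x : ι → ℕ → R) (a : ι) (K : List ι) (N : ℕ) :
    nestedSum x (a :: K) N = ∑ i ∈ Finset.range N, x a i * nestedSum x K i := rfl

theorem cons_succ (x : ι → ℕ → R) (a : ι) (K : List ι) (N : ℕ) :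
    nestedSum x (a :: K) (N + 1) = nestedSum x (a :: K) N + x a N * nestedSum x K N :=
  Finset.sum_range_succ _ N

theorem map {S : Type*} [Semiring S] (φ : R →+* S) (x : ι → ℕ → R) (K : List ι) (N : ℕ) :
    φ (nestedSum x K N) = nestedSum (fun a i => φ (x a i)) K N := by
  induction K generalizing N with
  | nil => simp [nil]
  | cons a K ih => simp [cons, ih]

end Semiring

theorem prod_map_mul {R : Type*} [CommSemiring R] (y : ι → R) (x : ι → ℕ → R)
    (K : List ι) (N : ℕ) :
    (K.map y).prod * nestedSum x K N = nestedSum (fun a i => y a * x a i) K N := by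
  induction K generalizing N with
  | nil => simp [nil]
  | cons a K ih =>
    simp only [cons, List.map_cons, List.prod_cons, Finset.mul_sum, ← ih]
    exact Finset.sum_congr rfl fun i _ => by ring

theorem nonneg {R : Type*} [Semiring R] [PartialOrder R] [IsOrderedRing R]
    {x : ι → ℕ → R} (hx : ∀ a i, 0 ≤ x a i) (K : List ι) (N : ℕ) : 0 ≤ nestedSum x K N := by
  induction K generalizing N with
  | nil => exact zero_le_one
  | cons a K ih => exact Finset.sum_nonneg fun i _ => mul_nonneg (hx a i) (ih i)

theorem norm_le {R : Type*} [SeminormedRing R] [NormOneClass R] (x : ι → ℕ → R)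
    (K : List ι) (N : ℕ) : ‖nestedSum x K N‖ ≤ nestedSum (fun a i => ‖x a i‖) K N := by
  induction K generalizing N with
  | nil => simp [nil]
  | cons a K ih =>
    refine norm_sum_le_of_le _ fun i _ => (norm_mul_le _ _).trans ?_
    gcongr
    exact ih i

section RCLike

variable {𝕜 : Type*} [RCLike 𝕜]

theorem hasSum {x : ι → ℕ → 𝕜} {c : ℕ → 𝕜} (hx : ∀ i, HasSum (fun a => x a i) (c i)) (N : ℕ) :
    HasSum (fun K => nestedSum x K N) (∏ i ∈ Finset.range N, (1 + c i)) := by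
  induction N with
  | zero =>
    have h := hasSum_single (f := fun K => nestedSum x K 0) [] fun K hK => by
      obtain ⟨a, K, rfl⟩ := List.exists_cons_of_ne_nil hK
      simp [cons]
    simpa [nil] using h
  | succ N ih =>
    have hmul := hasSum_mul_of_rclike (hx N) ih
    have hdiff : HasSum (fun K => nestedSum x K (N + 1) - nestedSum x K N)
        (c N * ∏ i ∈ Finset.range N, (1 + c i)) :=
      (hasSum_list_iff (by simp [nil])).1 (by simpa [cons_succ] using hmul)
    rw [Finset.prod_range_succ, mul_add, mul_one, mul_comm _ (c N)]
    simpa using ih.add hdiff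

theorem summable_mul {x y : ι → ℕ → 𝕜} {c d : ℕ → ℝ} (hx : ∀ i, HasSum (fun a => ‖x a i‖) (c i))
    (hy : ∀ i, HasSum (fun a => ‖y a i‖) (d i))
    (h : Summable fun i => d i * ∏ j ∈ Finset.range i, (1 + c j)) :
    Summable fun p : ℕ × ι × List ι => y p.2.1 p.1 * nestedSum x p.2.2 p.1 := by
  have hfib (i : ℕ) := hasSum_mul_of_rclike (hy i) (hasSum hx i)
  have hnonneg (p : ℕ × ι × List ι) :
      0 ≤ ‖y p.2.1 p.1‖ * nestedSum (fun a i => ‖x a i‖) p.2.2 p.1 :=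
    mul_nonneg (norm_nonneg _) (nonneg (fun _ _ => norm_nonneg _) _ _)
  refine .of_norm_bounded (hasSum_prod_of_nonneg hnonneg hfib h.hasSum).summable fun p => ?_
  rw [norm_mul]
  exact mul_le_mul_of_nonneg_left (norm_le x _ _) (norm_nonneg _)

theorem hasSum_tsum_mul {x y : ι → ℕ → 𝕜} {c d : ℕ → 𝕜}
    (hx : ∀ i, HasSum (fun a => x a i) (c i)) (hy : ∀ i, HasSum (fun a => y a i) (d i))
    (h : Summable fun p : ℕ × ι × List ι => y p.2.1 p.1 * nestedSum x p.2.2 p.1) :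
    HasSum (fun q : ι × List ι => ∑' i, y q.1 i * nestedSum x q.2 i)
      (∑' i, d i * ∏ j ∈ Finset.range i, (1 + c j)) := by
  have hfib (i : ℕ) := hasSum_mul_of_rclike (hy i) (hasSum hx i)
  rw [(h.hasSum.prod_fiberwise hfib).tsum_eq, ← (Equiv.prodComm _ _).tsum_eq]
  exact h.prod_symm.hasSum.prod_fiberwise fun q => (h.prod_symm.prod_factor q).hasSum

end RCLike

theorem indicator_strictAnti_vecCons {R : Type*} [CommSemiring R] (x : ι → ℕ → R) (a : ι)
    (K : List ι) (i : ℕ) (m : Fin K.length → ℕ) :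
    {m : Fin (a :: K).length → ℕ | StrictAnti m}.indicator
        (fun m => ∏ j, x ((a :: K).get j) (m j)) (Matrix.vecCons i m) =
      x a i * {m | StrictAnti (Matrix.vecCons i m)}.indicator
        (fun m => ∏ j, x (K.get j) (m j)) m := by
  simp [Set.indicator, Fin.prod_univ_succ]

theorem hasSum_strictAnti {x : ι → ℕ → ℝ} (hx : ∀ a i, 0 ≤ x a i) (K : List ι) (N : ℕ) :
    HasSum ({m : Fin K.length → ℕ | StrictAnti (Matrix.vecCons N m)}.indicator
      fun m => ∏ j, x (K.get j) (m j)) (nestedSum x K N) := by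
  induction K generalizing N with
  | nil =>
    have : IsEmpty (Fin ([] : List ι).length) := Fin.isEmpty
    simp [nil, Subsingleton.strictAnti]
  | cons a K ih =>
    have hfib (i : ℕ) : HasSum (fun m => {m : Fin (a :: K).length → ℕ |
          StrictAnti (Matrix.vecCons N m)}.indicator
          (fun m => ∏ j, x ((a :: K).get j) (m j)) (Matrix.vecCons i m))
        (if i < N then x a i * nestedSum x K i else 0) := by
      have h := (ih i).mul_left (x a i)
      simp only [← indicator_strictAnti_vecCons] at h
      split_ifs with hi
      · simpa [Set.indicator, hi] using h
      · simp [Set.indicator, hi, hasSum_zero]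
    refine hasSum_vecCons_of_nonneg (Set.indicator_nonneg fun m _ =>
      Finset.prod_nonneg fun i _ => hx _ _) hfib ?_
    have hsum := hasSum_sum_of_ne_finset_zero (L := .unconditional ℕ) (s := Finset.range N)
      (f := fun i => if i < N then x a i * nestedSum x K i else 0)
      fun i hi => if_neg (by simpa using hi)
    rwa [Finset.sum_congr rfl fun i hi => if_pos (Finset.mem_range.1 hi)] at hsum

theorem tsum_strictAnti {x : ι → ℕ → ℝ} (hx : ∀ a i, 0 ≤ x a i) (a : ι) (K : List ι) :
    ∑' m : Fin (a :: K).length → ℕ,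
      {m | StrictAnti m}.indicator (fun m => ∏ j, x ((a :: K).get j) (m j)) m =
    ∑' i, x a i * nestedSum x K i := by
  refine tsum_vecCons_of_nonneg (Set.indicator_nonneg fun m _ =>
    Finset.prod_nonneg fun j _ => hx _ _) fun i => ?_
  simpa only [← indicator_strictAnti_vecCons] using (hasSum_strictAnti hx K i).mul_left (x a i)

end nestedSum

/-- The factor `(2i+1)^{-k}` contributed to a multiple `t`-value by an entry `k` of the index and
the odd summation variable `2i+1`. -/
def oddPowInv (𝕜 : Type*) [DivisionRing 𝕜] (k i : ℕ) : 𝕜 := ((2 * i + 1 : 𝕜) ^ k)⁻¹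

theorem oddPowInv_nonneg (k i : ℕ) : 0 ≤ oddPowInv ℝ k i := by
  unfold oddPowInv
  positivity

theorem ofReal_oddPowInv (k i : ℕ) : (oddPowInv ℝ k i : ℂ) = oddPowInv ℂ k i := by
  simp [oddPowInv]

theorem multT_eq_tsum_strictAnti (K : List ℕ) :
    multT K = ∑' m : Fin K.length → ℕ,
      {m | StrictAnti m}.indicator (fun m => ∏ j, oddPowInv ℝ (K.get j) (m j)) m := by
  have hinj : Function.Injective fun (m : Fin K.length → ℕ) j => 2 * m j + 1 :=
    fun m m' h => funext fun j => by simpa using congrFun h j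
  rw [multT, ← hinj.tsum_eq]
  · refine tsum_congr fun m => ?_
    simp [Set.indicator, StrictAnti, oddPowInv]
  · intro m hm
    have hodd : ∀ j, Odd (m j) := by
      by_contra h
      exact hm (if_neg fun h' => h h'.1)
    choose m' hm' using hodd
    exact ⟨m', funext fun j => (hm' j).symm⟩

theorem multT_cons (k : ℕ) (K : List ℕ) :
    multT (k :: K) = ∑' i, oddPowInv ℝ k i * nestedSum (oddPowInv ℝ) K i := by
  rw [multT_eq_tsum_strictAnti, nestedSum.tsum_strictAnti oddPowInv_nonneg]

section Weights

/-- The weight `u^{k-2}` of the leading entry `k` of an admissible index; it vanishes for `k < 2`,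
which is how admissibility enters the generating function. -/
def leadWeight {R : Type*} [Semiring R] (u : R) : ℕ → R
  | 0 => 0
  | 1 => 0
  | k + 2 => u ^ k

/-- The weight of a non-leading entry of an index: `v` for an entry `1`, `w u^{k-2}` for an entry
`k ≥ 2`, and `0` for the entry `0`, which no index contains. -/
def entryWeight {R : Type*} [Semiring R] (u v w : R) : ℕ → R
  | 0 => 0
  | 1 => v
  | k + 2 => w * u ^ k

/-- The coefficient with which `multT K` enters the generating function of the height-graded sums
`G0h`; it vanishes unless `K` is admissible. -/
def indexWeight {R : Type*} [Semiring R] (u v w : R) : List ℕ → R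
  | [] => 0
  | k :: K => leadWeight u k * (K.map (entryWeight u v w)).prod

section NormedField

variable {𝕜 : Type*} [NormedField 𝕜]

theorem norm_leadWeight (u : 𝕜) (k : ℕ) : ‖leadWeight u k‖ = leadWeight ‖u‖ k := by
  rcases k with _ | _ | k <;> simp [leadWeight]

theorem norm_entryWeight (u v w : 𝕜) (k : ℕ) :
    ‖entryWeight u v w k‖ = entryWeight ‖u‖ ‖v‖ ‖w‖ k := by
  rcases k with _ | _ | k <;> simp [entryWeight]

theorem hasSum_pow_mul_inv_pow_add_two {u z : 𝕜} (h : ‖u‖ < ‖z‖) :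
    HasSum (fun k => u ^ k * (z ^ (k + 2))⁻¹) (1 / (z * (z - u))) := by
  have hz : z ≠ 0 := norm_pos_iff.1 ((norm_nonneg u).trans_lt h)
  have hzu : z - u ≠ 0 := sub_ne_zero.2 fun e => h.ne' (congrArg norm e)
  have hgeom := (hasSum_geometric_of_norm_lt_one (ξ := u / z)
    (by rwa [norm_div, div_lt_one (norm_pos_iff.2 hz)])).mul_left (z ^ 2)⁻¹
  convert! hgeom using 1
  · ext k
    rw [div_pow]
    field_simp
    ring
  · field_simp

end NormedField

end Weights

/-- The sum over all `k` of the weight of a leading entry `k` times `(2i+1)^{-k}`. -/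
def leadSeries {𝕜 : Type*} [Field 𝕜] (u : 𝕜) (i : ℕ) : 𝕜 :=
  1 / ((2 * i + 1) * (2 * i + 1 - u))

/-- The sum over all `k` of the weight of a non-leading entry `k` times `(2i+1)^{-k}`. -/
def entrySeries {𝕜 : Type*} [Field 𝕜] (u v w : 𝕜) (i : ℕ) : 𝕜 :=
  v / (2 * i + 1) + w / ((2 * i + 1) * (2 * i + 1 - u))

/-- The total contribution to the generating function of the terms whose largest summation
variable is `m₁ = 2i+1`. -/
def levelTerm {𝕜 : Type*} [Field 𝕜] (u v w : 𝕜) (i : ℕ) : 𝕜 :=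
  leadSeries u i * ∏ j ∈ Finset.range i, (1 + entrySeries u v w j)

section RCLike

variable {𝕜 : Type*} [RCLike 𝕜]

theorem norm_two_mul_add_one (i : ℕ) : ‖(2 * i + 1 : 𝕜)‖ = 2 * i + 1 := by
  simpa using RCLike.norm_natCast (K := 𝕜) (2 * i + 1)

theorem norm_oddPowInv (k i : ℕ) : ‖oddPowInv 𝕜 k i‖ = oddPowInv ℝ k i := by
  rw [oddPowInv, norm_inv, norm_pow, norm_two_mul_add_one, oddPowInv]

theorem norm_lt_norm_two_mul_add_one {u : 𝕜} (hu : ‖u‖ < 1) (i : ℕ) :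
    ‖u‖ < ‖(2 * i + 1 : 𝕜)‖ := by
  rw [norm_two_mul_add_one]
  linarith [Nat.cast_nonneg (α := ℝ) i]

theorem hasSum_leadWeight_mul_oddPowInv {u : 𝕜} (hu : ‖u‖ < 1) (i : ℕ) :
    HasSum (fun k => leadWeight u k * oddPowInv 𝕜 k i) (leadSeries u i) := by
  rw [← hasSum_nat_add_iff' 2]
  simpa [leadSeries, leadWeight, oddPowInv, Finset.sum_range_succ] using
    hasSum_pow_mul_inv_pow_add_two (norm_lt_norm_two_mul_add_one hu i)

theorem hasSum_entryWeight_mul_oddPowInv {u : 𝕜} (hu : ‖u‖ < 1) (v w : 𝕜) (i : ℕ) :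
    HasSum (fun k => entryWeight u v w k * oddPowInv 𝕜 k i) (entrySeries u v w i) := by
  rw [← hasSum_nat_add_iff' 2]
  have h := (hasSum_pow_mul_inv_pow_add_two (norm_lt_norm_two_mul_add_one hu i)).mul_left w
  simpa [entrySeries, entryWeight, oddPowInv, Finset.sum_range_succ, mul_assoc, div_eq_mul_inv]
    using h

end RCLike

section Summability

variable {u v w : ℝ}

theorem two_mul_add_one_sub_pos (hu : u < 1) (i : ℕ) : 0 < (2 * i + 1 - u : ℝ) := by
  linarith [Nat.cast_nonneg (α := ℝ) i]

theorem prod_one_add_entrySeries_nonneg (hu : u < 1) (hv : 0 ≤ v) (hw : 0 ≤ w) (n : ℕ) :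
    0 ≤ ∏ j ∈ Finset.range n, (1 + entrySeries u v w j) :=
  Finset.prod_nonneg fun j _ => by
    have := two_mul_add_one_sub_pos hu j
    unfold entrySeries
    positivity

theorem prod_one_add_entrySeries_div_sub_succ (hu : u < 1) (n : ℕ) :
    (∏ j ∈ Finset.range n, (1 + entrySeries u v w j)) / (2 * n + 1) -
        (∏ j ∈ Finset.range (n + 1), (1 + entrySeries u v w j)) / (2 * (n + 1 : ℕ) + 1) =
      (∏ j ∈ Finset.range n, (1 + entrySeries u v w j)) / ((2 * n + 1) * (2 * n + 3)) *
        (2 - v - w / (2 * n + 1 - u)) := by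
  have := (two_mul_add_one_sub_pos hu n).ne'
  rw [Finset.prod_range_succ, entrySeries]
  push_cast
  field_simp
  ring

theorem eventually_half_le_sub_div (hu : u < 1) (hv : v < 2) :
    ∀ᶠ n : ℕ in Filter.atTop, (2 - v) / 2 ≤ 2 - v - w / (2 * n + 1 - u) := by
  have hv' : 0 < 2 - v := sub_pos.2 hv
  filter_upwards [(tendsto_natCast_atTop_atTop (R := ℝ)).eventually_ge_atTop (w / (2 - v))]
    with n hn
  have hdiv : w / (2 * n + 1 - u) ≤ (2 - v) / 2 := by
    rw [div_le_iff₀ (two_mul_add_one_sub_pos hu n)]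
    nlinarith [(div_le_iff₀ hv').1 hn]
  linarith

-- Kummer's test: since `v < 2`, the drop of `∏_{j<n} (1 + entrySeries u v w j) / (2n+1)` from `n`
-- to `n + 1` is eventually at least a constant multiple of `levelTerm u v w n`.
theorem summable_levelTerm_of_nonneg (hu : u < 1) (hv₀ : 0 ≤ v) (hv : v < 2) (hw : 0 ≤ w) :
    Summable (levelTerm u v w) := by
  set P : ℕ → ℝ := fun n => ∏ j ∈ Finset.range n, (1 + entrySeries u v w j) with hP
  have hP₀ (n : ℕ) : 0 ≤ P n := prod_one_add_entrySeries_nonneg hu hv₀ hw n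
  have hterm (n : ℕ) : levelTerm u v w n = P n / ((2 * n + 1) * (2 * n + 1 - u)) :=
    one_div_mul_eq_div _ _
  have hv' : 0 < 2 - v := sub_pos.2 hv
  refine summable_of_eventually_le_sub_succ (b := fun n => 4 / (2 - v) * (P n / (2 * n + 1)))
    (fun n => ?_) (fun n => ?_) ?_
  · rw [hterm]
    have := two_mul_add_one_sub_pos hu n
    have := hP₀ n
    positivity
  · have := hP₀ n
    positivity
  filter_upwards [Filter.eventually_ge_atTop 2, eventually_half_le_sub_div (w := w) hu hv]
    with n hn hdrop
  have hn' : (2 : ℝ) ≤ n := mod_cast hn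
  have := hP₀ n
  calc levelTerm u v w n
      ≤ P n / ((2 * n + 1) * ((2 * n + 3) / 2)) := by
        rw [hterm]
        gcongr
        linarith
    _ = 4 / (2 - v) * (P n / ((2 * n + 1) * (2 * n + 3)) * ((2 - v) / 2)) := by
        field_simp
        norm_num
    _ ≤ 4 / (2 - v) * (P n / ((2 * n + 1) * (2 * n + 3)) * (2 - v - w / (2 * n + 1 - u))) := by
        gcongr
    _ = 4 / (2 - v) * (P n / (2 * n + 1)) -
          4 / (2 - v) * (P (n + 1) / (2 * (n + 1 : ℕ) + 1)) := by
        rw [← mul_sub, hP, prod_one_add_entrySeries_div_sub_succ hu]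

end Summability

theorem tsum_weight_mul_nestedSum (u v w : ℂ) (k : ℕ) (K : List ℕ) :
    ∑' i, leadWeight u k * oddPowInv ℂ k i *
        nestedSum (fun k i => entryWeight u v w k * oddPowInv ℂ k i) K i =
      indexWeight u v w (k :: K) * multT (k :: K) := by
  rw [multT_cons, Complex.ofReal_tsum, indexWeight, ← tsum_mul_left]
  refine tsum_congr fun i => ?_
  have hcast : ((nestedSum (oddPowInv ℝ) K i : ℝ) : ℂ) = nestedSum (oddPowInv ℂ) K i := by
    simpa [ofReal_oddPowInv] using nestedSum.map Complex.ofRealHom (oddPowInv ℝ) K i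
  rw [← nestedSum.prod_map_mul, Complex.ofReal_mul, hcast, ofReal_oddPowInv]
  ring

theorem hasSum_indexWeight_mul_multT {u v w : ℂ} (hu : ‖u‖ < 1) (hv : ‖v‖ < 2) :
    HasSum (fun K => indexWeight u v w K * multT K) (∑' i, levelTerm u v w i) := by
  have hentry := hasSum_entryWeight_mul_oddPowInv hu v w
  have hlead := hasSum_leadWeight_mul_oddPowInv hu
  have hu' : ‖‖u‖‖ < 1 := by rwa [norm_norm]
  have hentry' (i : ℕ) := hasSum_entryWeight_mul_oddPowInv hu' ‖v‖ ‖w‖ i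
  have hlead' (i : ℕ) := hasSum_leadWeight_mul_oddPowInv hu' i
  simp only [← norm_entryWeight, ← norm_leadWeight, ← norm_oddPowInv (𝕜 := ℂ), ← norm_mul]
    at hentry' hlead'
  have hlevel := summable_levelTerm_of_nonneg hu (norm_nonneg v) hv (norm_nonneg w)
  have hsummable := nestedSum.summable_mul hentry' hlead' hlevel
  have hsum := nestedSum.hasSum_tsum_mul hentry hlead hsummable
  simp only [tsum_weight_mul_nestedSum] at hsum
  exact (hasSum_list_iff (by simp [indexWeight])).1 hsum

/-- The height of an index, i.e. the number of its entries that are at least `2`. -/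
def indexHeight (K : List ℕ) : ℕ := K.countP fun i => decide (2 ≤ i)

/-- The exponents `(k - n - s, n - s, s - 1)` of `u, v, w` in the generating function for an index
of weight `k`, depth `n` and height `s`. No subtraction truncates on admissible indices. -/
def indexExponents (K : List ℕ) : ℕ × ℕ × ℕ :=
  (K.sum - K.length - indexHeight K, K.length - indexHeight K, indexHeight K - 1)

theorem indexHeight_le_length (K : List ℕ) : indexHeight K ≤ K.length := List.countP_le_length

theorem length_add_indexHeight_le_sum {K : List ℕ} (hK : ∀ i ∈ K, 1 ≤ i) :
    K.length + indexHeight K ≤ K.sum := by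
  induction K with
  | nil => simp [indexHeight]
  | cons k K ih =>
    obtain ⟨hk, hK⟩ := List.forall_mem_cons.1 hK
    have hle := ih hK
    simp only [indexHeight, List.countP_cons, decide_eq_true_eq, List.length_cons,
      List.sum_cons] at hle ⊢
    split_ifs <;> omega

theorem Admissible.exists_eq_cons {K : List ℕ} (hK : Admissible K) :
    ∃ k L, K = (k + 2) :: L ∧ ∀ i ∈ L, 1 ≤ i := by
  obtain ⟨hpos, hhead⟩ := hK
  rcases K with _ | ⟨_ | _ | k, L⟩
  · simp at hhead
  · simp at hhead
  · simp at hhead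
  · exact ⟨k, L, rfl, (List.forall_mem_cons.1 hpos).2⟩

theorem indexHeight_add_two_cons (k : ℕ) (K : List ℕ) :
    indexHeight ((k + 2) :: K) = indexHeight K + 1 := by
  simp [indexHeight]

theorem Admissible.indexExponents_eq_iff {K : List ℕ} (hK : Admissible K) (p : ℕ × ℕ × ℕ) :
    indexExponents K = p ↔ K.sum = p.1 + p.2.1 + 2 * p.2.2 + 2 ∧
      K.length = p.2.1 + p.2.2 + 1 ∧ indexHeight K = p.2.2 + 1 := by
  have hle := length_add_indexHeight_le_sum hK.1
  have hle' := indexHeight_le_length K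
  have hpos : 0 < indexHeight K := by
    obtain ⟨k, L, rfl, -⟩ := hK.exists_eq_cons
    simp [indexHeight_add_two_cons]
  rw [indexExponents, Prod.ext_iff, Prod.ext_iff]
  dsimp only
  omega

section IndexWeight

variable {R : Type*} [CommSemiring R]

theorem prod_map_entryWeight (u v w : R) {K : List ℕ} (hK : ∀ i ∈ K, 1 ≤ i) :
    (K.map (entryWeight u v w)).prod =
      u ^ (K.sum - K.length - indexHeight K) * v ^ (K.length - indexHeight K) *
        w ^ indexHeight K := by
  induction K with
  | nil => simp [indexHeight]
  | cons k K ih =>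
    obtain ⟨hk, hK⟩ := List.forall_mem_cons.1 hK
    have hle := length_add_indexHeight_le_sum hK
    have hle' := indexHeight_le_length K
    rw [List.map_cons, List.prod_cons, ih hK, List.sum_cons, List.length_cons]
    rcases k with _ | _ | k
    · omega
    · have hheight : indexHeight (1 :: K) = indexHeight K := by simp [indexHeight]
      rw [zero_add, hheight, entryWeight, Nat.sub_add_comm hle', pow_succ,
        show 1 + K.sum - (K.length + 1) - indexHeight K =
          K.sum - K.length - indexHeight K by omega]
      ring
    · rw [indexHeight_add_two_cons, entryWeight, Nat.add_sub_add_right, pow_succ,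
        show k + 2 + K.sum - (K.length + 1) - (indexHeight K + 1) =
          k + (K.sum - K.length - indexHeight K) by omega, pow_add]
      ring

theorem indexWeight_of_admissible (u v w : R) {K : List ℕ} (hK : Admissible K) :
    indexWeight u v w K =
      u ^ (indexExponents K).1 * v ^ (indexExponents K).2.1 * w ^ (indexExponents K).2.2 := by
  obtain ⟨k, L, rfl, hL⟩ := hK.exists_eq_cons
  have hle := length_add_indexHeight_le_sum hL
  rw [indexWeight, leadWeight, prod_map_entryWeight u v w hL, indexExponents,
    indexHeight_add_two_cons, List.sum_cons, List.length_cons]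
  dsimp only
  rw [Nat.add_sub_add_right, Nat.add_sub_cancel,
    show k + 2 + L.sum - (L.length + 1) - (indexHeight L + 1) =
      k + (L.sum - L.length - indexHeight L) by omega, pow_add]
  ring

theorem indexWeight_of_not_admissible (u v w : R) {K : List ℕ} (hK : ¬Admissible K) :
    indexWeight u v w K = 0 := by
  rcases K with _ | ⟨_ | _ | k, L⟩
  · rfl
  · simp [indexWeight, leadWeight]
  · simp [indexWeight, leadWeight]
  · have hzero : 0 ∈ L := by
      by_contra h
      refine hK ⟨fun i hi => Nat.one_le_iff_ne_zero.2 ?_, by simp⟩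
      rintro rfl
      simp [h] at hi
    rw [indexWeight, List.prod_eq_zero (List.mem_map.2 ⟨0, hzero, rfl⟩), mul_zero]

end IndexWeight

theorem G0h_eq_tsum_indexExponents (p : ℕ × ℕ × ℕ) :
    G0h (p.1 + p.2.1 + 2 * p.2.2 + 2) (p.2.1 + p.2.2 + 1) (p.2.2 + 1) =
      ∑' K, if Admissible K ∧ indexExponents K = p then multT K else 0 :=
  tsum_congr fun _ => if_congr
    (and_congr_right fun hK => (hK.indexExponents_eq_iff p).symm) rfl rfl

theorem tsum_indexExponents_fiber (u v w : ℂ) (p : ℕ × ℕ × ℕ) :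
    ∑' K : indexExponents ⁻¹' {p}, indexWeight u v w K * multT K =
      G0h (p.1 + p.2.1 + 2 * p.2.2 + 2) (p.2.1 + p.2.2 + 1) (p.2.2 + 1)
        * u ^ p.1 * v ^ p.2.1 * w ^ p.2.2 := by
  rw [tsum_subtype (indexExponents ⁻¹' {p}) fun K => indexWeight u v w K * (multT K : ℂ),
    G0h_eq_tsum_indexExponents, Complex.ofReal_tsum, ← tsum_mul_right, ← tsum_mul_right,
    ← tsum_mul_right]
  refine tsum_congr fun K => ?_
  by_cases hK : Admissible K
  · by_cases hp : indexExponents K = p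
    · rw [Set.indicator_of_mem (by exact hp), if_pos ⟨hK, hp⟩,
        indexWeight_of_admissible u v w hK, hp]
      ring
    · simp [Set.indicator, hp]
  · simp [Set.indicator, hK, indexWeight_of_not_admissible u v w hK]

theorem hasSum_G0h_mul_pow {u v w : ℂ} (hu : ‖u‖ < 1) (hv : ‖v‖ < 2) :
    HasSum (fun p : ℕ × ℕ × ℕ =>
      (G0h (p.1 + p.2.1 + 2 * p.2.2 + 2) (p.2.1 + p.2.2 + 1) (p.2.2 + 1) : ℂ)
        * u ^ p.1 * v ^ p.2.1 * w ^ p.2.2) (∑' i, levelTerm u v w i) := by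
  simpa only [tsum_indexExponents_fiber] using
    (hasSum_indexWeight_mul_multT hu hv).tsum_fiberwise indexExponents

section Hypergeometric

theorem poch_ne_zero {a : ℂ} (ha : 0 < a.re) (n : ℕ) : poch a n ≠ 0 :=
  Finset.prod_ne_zero_iff.2 fun i _ h => by
    have hre : a.re + i = 0 := by simpa using congrArg Complex.re h
    linarith [Nat.cast_nonneg (α := ℝ) i]

theorem poch_one (n : ℕ) : poch 1 n = n.factorial := by
  rw [poch, ← Finset.prod_range_add_one_eq_factorial, Nat.cast_prod]
  exact Finset.prod_congr rfl fun i _ => by push_cast; ring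

theorem mul_poch_add_one (a : ℂ) (n : ℕ) : a * poch (a + 1) n = poch a n * (a + n) := by
  rw [poch, poch, ← Finset.prod_range_succ, Finset.prod_range_succ', mul_comm]
  congr 1
  · exact Finset.prod_congr rfl fun i _ => by push_cast; ring
  · simp

theorem two_mul_add_one_sub_ne_zero {u : ℂ} (hu : u.re < 1) (i : ℕ) :
    (2 * i + 1 - u : ℂ) ≠ 0 := by
  intro h
  have hre : (2 * i + 1 - u.re : ℝ) = 0 := by simpa using congrArg Complex.re h
  linarith [Nat.cast_nonneg (α := ℝ) i]

theorem prod_one_add_entrySeries_eq_poch {u v w α β : ℂ} (hu : u.re < 1)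
    (hadd : α + β = 1 - u / 2 + v / 2) (hmul : α * β = (1 - u + v - u * v + w) / 4) (n : ℕ) :
    ∏ j ∈ Finset.range n, (1 + entrySeries u v w j) =
      poch α n * poch β n / (poch (1 / 2) n * poch ((1 - u) / 2) n) := by
  simp only [poch, ← Finset.prod_mul_distrib, ← Finset.prod_div_distrib]
  refine Finset.prod_congr rfl fun j _ => ?_
  have hodd : (2 * j + 1 : ℂ) ≠ 0 := mod_cast (2 * j).succ_ne_zero
  have hoddu := two_mul_add_one_sub_ne_zero hu j
  have hnum : (α + j) * (β + j) =
      ((2 * j + 1) * (2 * j + 1 - u) + v * (2 * j + 1 - u) + w) / 4 := by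
    linear_combination hmul + j * hadd
  have hden : (1 / 2 + j : ℂ) * ((1 - u) / 2 + j) = (2 * j + 1) * (2 * j + 1 - u) / 4 := by ring
  rw [entrySeries, hnum, hden]
  field_simp
  ring

theorem levelTerm_eq_poch {u v w α β : ℂ} (hu : u.re < 1) (hadd : α + β = 1 - u / 2 + v / 2)
    (hmul : α * β = (1 - u + v - u * v + w) / 4) (n : ℕ) :
    levelTerm u v w n = (1 - u)⁻¹ * (poch α n * poch β n * poch 1 n /
      ((n.factorial : ℂ) * poch ((3 - u) / 2) n * poch (3 / 2) n) * 1 ^ n) := by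
  have hodd : (2 * n + 1 : ℂ) ≠ 0 := mod_cast (2 * n).succ_ne_zero
  have hoddu := two_mul_add_one_sub_ne_zero hu n
  have hu₁ : (1 - u : ℂ) ≠ 0 := by simpa using two_mul_add_one_sub_ne_zero hu 0
  have hre : 0 < ((1 - u) / 2).re := by simpa using hu
  have hhalf := mul_poch_add_one (1 / 2) n
  have hhalfu := mul_poch_add_one ((1 - u) / 2) n
  rw [show (1 / 2 + 1 : ℂ) = 3 / 2 by norm_num] at hhalf
  rw [show (1 - u) / 2 + 1 = (3 - u) / 2 by ring] at hhalfu
  have h₁ := poch_ne_zero (a := 1 / 2) (by norm_num) n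
  have h₂ := poch_ne_zero hre n
  rw [levelTerm, leadSeries, prod_one_add_entrySeries_eq_poch hu hadd hmul, poch_one,
    one_pow, mul_one,
    show poch (3 / 2) n = poch (1 / 2) n * (2 * n + 1) by linear_combination 2 * hhalf,
    show poch ((3 - u) / 2) n = poch ((1 - u) / 2) n * (2 * n + 1 - u) / (1 - u) by
      rw [eq_div_iff hu₁]; linear_combination 2 * hhalfu]
  have hfact : (n.factorial : ℂ) ≠ 0 := mod_cast n.factorial_ne_zero
  field_simp

theorem tsum_levelTerm_eq_hyp3F2 {u v w α β : ℂ} (hu : u.re < 1)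
    (hadd : α + β = 1 - u / 2 + v / 2) (hmul : α * β = (1 - u + v - u * v + w) / 4) :
    ∑' n, levelTerm u v w n = (1 - u)⁻¹ * hyp3F2 α β 1 ((3 - u) / 2) (3 / 2) 1 := by
  rw [hyp3F2, ← tsum_mul_left]
  exact tsum_congr (levelTerm_eq_poch hu hadd hmul)

end Hypergeometric

theorem ohno_zagier_multiple_t_general {u v w : ℂ} (hu : ‖u‖ < 1) (hv : ‖v‖ < 2) :
    Summable (fun p : ℕ × ℕ × ℕ =>
        (G0h (p.1 + p.2.1 + 2 * p.2.2 + 2) (p.2.1 + p.2.2 + 1) (p.2.2 + 1) : ℂ)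
          * u ^ p.1 * v ^ p.2.1 * w ^ p.2.2) ∧
      ∀ α β : ℂ, α + β = 1 - u / 2 + v / 2 → α * β = (1 - u + v - u * v + w) / 4 →
        ∑' p : ℕ × ℕ × ℕ,
            (G0h (p.1 + p.2.1 + 2 * p.2.2 + 2) (p.2.1 + p.2.2 + 1) (p.2.2 + 1) : ℂ)
              * u ^ p.1 * v ^ p.2.1 * w ^ p.2.2
          = (1 - u)⁻¹ * hyp3F2 α β 1 ((3 - u) / 2) (3 / 2) 1 := by
  have h := hasSum_G0h_mul_pow (w := w) hu hv
  refine ⟨h.summable, fun α β hadd hmul => ?_⟩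
  rw [h.tsum_eq, tsum_levelTerm_eq_hyp3F2 ((Complex.re_le_norm u).trans_lt hu) hadd hmul]

/-- Ohno–Zagier type relation for multiple `t`-values (Theorem 1.1):
the generating function of the sums `G₀(k,n,s)` of multiple `t`-values of fixed weight `k`,
depth `n` and height `s` equals `(1/(1-u)) ⬝ ₃F₂(α, β, 1; (3-u)/2, 3/2; 1)` where
`α + β = 1 - u/2 + v/2` and `αβ = (1 - u + v - uv + w)/4`. -/
theorem ohno_zagier_multiple_t :
    ∃ δ > (0 : ℝ), ∀ u v w : ℝ, |u| < δ → |v| < δ → |w| < δ →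
      Summable (fun p : ℕ × ℕ × ℕ =>
        G0h (p.1 + p.2.1 + 2 * p.2.2 + 2) (p.2.1 + p.2.2 + 1) (p.2.2 + 1)
          * u ^ p.1 * v ^ p.2.1 * w ^ p.2.2) ∧
      ∀ α β : ℂ, α + β = 1 - (u : ℂ) / 2 + (v : ℂ) / 2 →
        α * β = (1 - (u : ℂ) + (v : ℂ) - (u : ℂ) * (v : ℂ) + (w : ℂ)) / 4 →
        ((∑' p : ℕ × ℕ × ℕ,
            G0h (p.1 + p.2.1 + 2 * p.2.2 + 2) (p.2.1 + p.2.2 + 1) (p.2.2 + 1)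
              * u ^ p.1 * v ^ p.2.1 * w ^ p.2.2) : ℂ)
          = (1 - (u : ℂ))⁻¹ * hyp3F2 α β 1 ((3 - (u : ℂ)) / 2) (3 / 2) 1 := by
  refine ⟨1, one_pos, fun u v w hu hv _ => ?_⟩
  obtain ⟨hsum, htsum⟩ := ohno_zagier_multiple_t_general (u := u) (v := v) (w := w)
    (by simpa using hu) (by simpa using hv.trans one_lt_two)
  exact ⟨by exact_mod_cast hsum, htsum⟩
end

section
/- There exists δ > 0 such that for all real u, v, w with |u|, |v|, |w| < δ, the series ∑_{k ≥ n+s, n ≥ s ≥ 1} G_0^*(k,n,s) u^{k−n−s} v^{n−s} w^{s−1} converges absolutely and equals (1/(1−u−v+uv−w)) · ₃F₂((1−u)/2, 1/2, 1; α*, β*; 1), where α* and β* are the two (possibly complex) roots of the quadratic X² − (3 − u/2 − v/2)X + (9 − 3u − 3v + uv − w)/4 = 0 (i.e. α* + β* = 3 − u/2 − v/2 and α*β* = (9 − 3u − 3v + uv − w)/4). -/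
open scoped BigOperators

/-!
Give the entries of an index weights whose product is the monomial in `u`, `v`, `w` carried by the
index, so that the generating function is a sum over all admissible indices at once. Fix the first
odd summation variable `m` and sum over all words in the remaining entries: the nested sums
`m ≥ m₂ ≥ ⋯` add up to complete homogeneous symmetric functions, whose generating function is the
finite product over the odd `x ≤ m` of `(1 - ∑ₖ weight(k) / xᵏ)⁻¹`. The inner sum is geometric,
and `1 - ∑ₖ weight(k) / xᵏ = ((x - u) (x - v) - w) / (x (x - u))`, so the terms of the remaining
sum over `m` have rational ratios, and it is the stated `₃F₂`. Absolute convergence follows from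
the same computation with `|u|`, `|v|`, `|w|` and Kummer's test.
-/

namespace OhnoZagier

open Finset
open scoped NNReal ENNReal

variable {ι R 𝕜 : Type*}

theorem hasSum_list [AddCommMonoid R] [TopologicalSpace R] [ContinuousAdd R] {F : List ι → R}
    {a : R} (h : HasSum (fun p : ι × List ι => F (p.1 :: p.2)) a) : HasSum F (F [] + a) := by
  have hinj : Function.Injective fun p : ι × List ι => p.1 :: p.2 := fun p q hpq => by
    simpa [Prod.ext_iff] using hpq
  have hcompl : IsCompl {[]} (Set.range fun p : ι × List ι => p.1 :: p.2) := by
    refine IsCompl.of_eq (by ext L; simp) (Set.eq_univ_of_forall fun L => ?_)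
    cases L <;> simp
  exact (hasSum_singleton [] F).add_isCompl hcompl (hinj.hasSum_range_iff.2 h)

theorem hasSum_mul_of_summable_norm [NormedRing 𝕜] [CompleteSpace 𝕜] {κ : Type*} {f : ι → 𝕜}
    {g : κ → 𝕜} {a b : 𝕜} (hf : HasSum f a) (hg : HasSum g b) (hf' : Summable fun x => ‖f x‖)
    (hg' : Summable fun y => ‖g y‖) : HasSum (fun p : ι × κ => f p.1 * g p.2) (a * b) :=
  hf.mul hg (summable_mul_of_summable_norm hf' hg')

theorem hasSum_sum_mul_of_summable_norm [NormedRing 𝕜] [CompleteSpace 𝕜] {κ α : Type*}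
    {f : ι → α → 𝕜} {g : κ → α → 𝕜} {a b : α → 𝕜} (hf : ∀ i, HasSum (f · i) (a i))
    (hg : ∀ i, HasSum (g · i) (b i)) (hf' : ∀ i, Summable fun x => ‖f x i‖)
    (hg' : ∀ i, Summable fun y => ‖g y i‖) (s : Finset α) :
    HasSum (fun p : ι × κ => ∑ i ∈ s, f p.1 i * g p.2 i) (∑ i ∈ s, a i * b i) :=
  hasSum_sum fun i _ => (hasSum_mul_of_summable_norm (hf i) (hg i) (hf' i) (hg' i) :)

/-! ### Nested sums -/

/-- The nested sum `∑_{j ≥ i₁ ≥ ⋯ ≥ iₙ} f(k₁, i₁) ⋯ f(kₙ, iₙ)` of the word `[k₁, …, kₙ]`, defined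
by recursion on the word. With `f(k, i) = (2i + 1)^(-k)` it is a truncated multiple `t`-star
value; weights on the letters are absorbed into `f`. -/
def nestedSum [Semiring R] (f : ι → ℕ → R) : List ι → ℕ → R
  | [], _ => 1
  | k :: L, j => ∑ i ∈ range (j + 1), f k i * nestedSum f L i

theorem map_nestedSum {S : Type*} [Semiring R] [Semiring S] (φ : R →+* S) (f : ι → ℕ → R)
    (L : List ι) (j : ℕ) : φ (nestedSum f L j) = nestedSum (fun k i => φ (f k i)) L j := by
  induction L generalizing j with
  | nil => simp [nestedSum]
  | cons k L ih => simp [nestedSum, ih]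

theorem nestedSum_mul_left [CommSemiring R] (c : ι → R) (f : ι → ℕ → R) (L : List ι) (j : ℕ) :
    nestedSum (fun k i => c k * f k i) L j = (L.map c).prod * nestedSum f L j := by
  induction L generalizing j with
  | nil => simp [nestedSum]
  | cons k L ih =>
    simp only [nestedSum, ih, List.map_cons, List.prod_cons, mul_sum]
    exact sum_congr rfl fun i _ => by ring

theorem nestedSum_nonneg [Semiring R] [PartialOrder R] [IsOrderedRing R] {f : ι → ℕ → R}
    (hf : ∀ k i, 0 ≤ f k i) (L : List ι) (j : ℕ) : 0 ≤ nestedSum f L j := by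
  induction L generalizing j with
  | nil => exact zero_le_one
  | cons k L ih => exact sum_nonneg fun i _ => mul_nonneg (hf k i) (ih i)

theorem norm_nestedSum_le [SeminormedRing 𝕜] [NormOneClass 𝕜] (f : ι → ℕ → 𝕜) (L : List ι)
    (j : ℕ) : ‖nestedSum f L j‖ ≤ nestedSum (fun k i => ‖f k i‖) L j := by
  induction L generalizing j with
  | nil => simp [nestedSum]
  | cons k L ih =>
    refine norm_sum_le_of_le _ fun i _ => (norm_mul_le _ _).trans ?_
    gcongr
    exact ih i

/-! ### Sums over antitone tuples -/

/-- The sum of `∏ₗ f(kₗ, mₗ)` over the antitone tuples `m` with entries in `B`, for the word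
`L = [k₁, …, kₙ]`. It takes values in `ℝ≥0∞` so that it can be rearranged freely, and `B` is a
parameter because the recursion on the word bounds the tail of `m` by its first entry. -/
noncomputable def antitoneTupleSum (f : ι → ℕ → ℝ≥0∞) (L : List ι) (B : Set ℕ) : ℝ≥0∞ :=
  ∑' m : Fin L.length → ℕ, {m | Antitone m ∧ ∀ l, m l ∈ B}.indicator
    (fun m => ∏ l, f (L.get l) (m l)) m

theorem antitone_cons_and_forall_mem_iff {α : Type*} [PartialOrder α] {n : ℕ} {a : α}
    {m : Fin n → α} {B : Set α} (hB : IsLowerSet B) :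
    (Antitone (Fin.cons a m : Fin (n + 1) → α) ∧ ∀ l, (Fin.cons a m : Fin (n + 1) → α) l ∈ B) ↔
      a ∈ B ∧ Antitone m ∧ ∀ l, m l ∈ Set.Iic a := by
  simp only [antitone_iff_forall_lt, Fin.forall_fin_succ, Fin.cons_zero, Fin.cons_succ,
    Fin.succ_lt_succ_iff, Fin.succ_pos, Fin.not_lt_zero, false_imp_iff, true_imp_iff, true_and,
    Set.mem_Iic]
  exact ⟨fun ⟨⟨hle, hm⟩, ha, _⟩ => ⟨ha, fun l => hm l, hle⟩,
    fun ⟨ha, hm, hle⟩ => ⟨⟨hle, fun l => hm (a := l)⟩, ha, fun l => hB (hle l) ha⟩⟩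

theorem antitoneTupleSum_cons (f : ι → ℕ → ℝ≥0∞) (k : ι) (L : List ι) {B : Set ℕ}
    (hB : IsLowerSet B) :
    antitoneTupleSum f (k :: L) B =
      ∑' i, B.indicator (fun i => f k i * antitoneTupleSum f L (Set.Iic i)) i := by
  classical
  have hcons (p : ℕ × (Fin L.length → ℕ)) :
      {m | Antitone m ∧ ∀ l, m l ∈ B}.indicator
        (fun m : Fin (k :: L).length → ℕ => ∏ l, f ((k :: L).get l) (m l))
          (Fin.consEquiv (fun _ => ℕ) p) =
      B.indicator (f k) p.1 * {m | Antitone m ∧ ∀ l, m l ∈ Set.Iic p.1}.indicator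
        (fun m => ∏ l, f (L.get l) (m l)) p.2 := by
    have hprod := Fin.prod_univ_succ (n := L.length) fun l =>
      f ((k :: L).get l) ((Fin.cons p.1 p.2 : Fin (L.length + 1) → ℕ) l)
    simp only [Set.indicator_apply, ite_mul, zero_mul, mul_ite, mul_zero, ← ite_and]
    exact if_congr ((antitone_cons_and_forall_mem_iff hB).trans and_comm) hprod rfl
  refine ((Fin.consEquiv fun _ => ℕ).tsum_eq _).symm.trans ((tsum_congr hcons).trans ?_)
  rw [ENNReal.tsum_prod (f := fun i m => B.indicator (f k) i *
    {m | Antitone m ∧ ∀ l, m l ∈ Set.Iic i}.indicator (fun m => ∏ l, f (L.get l) (m l)) m)]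
  simp only [ENNReal.tsum_mul_left, Set.indicator_mul_left]
  rfl

theorem antitoneTupleSum_Iic (f : ι → ℕ → ℝ≥0∞) (L : List ι) (j : ℕ) :
    antitoneTupleSum f L (Set.Iic j) = nestedSum f L j := by
  induction L generalizing j with
  | nil =>
    refine (tsum_eq_single (finZeroElim : Fin 0 → ℕ) fun m hm => ?_).trans ?_
    · exact absurd (Subsingleton.elim m _) hm
    · rw [Set.indicator_of_mem (Set.mem_ofPred.2 ⟨fun l => l.elim0, fun l => l.elim0⟩)]
      simp [nestedSum]
  | cons k L ih =>
    rw [antitoneTupleSum_cons f k L (isLowerSet_Iic j), tsum_eq_sum (s := range (j + 1))]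
    · refine sum_congr rfl fun i hi => ?_
      rw [Set.indicator_of_mem (by simpa [Nat.lt_succ_iff] using hi), ih]
    · exact fun i hi => Set.indicator_of_notMem (by simpa using hi) _

theorem tsum_antitone_prod_cons (f : ι → ℕ → ℝ≥0) (k : ι) (L : List ι) :
    ∑' m : Fin (k :: L).length → ℕ,
        {m | Antitone m}.indicator (fun m => ∏ l, f ((k :: L).get l) (m l)) m =
      ∑' i, f k i * nestedSum f L i := by
  have hnest (i : ℕ) : nestedSum (fun k i => (f k i : ℝ≥0∞)) L i = nestedSum f L i :=
    (map_nestedSum ENNReal.ofNNRealHom f L i).symm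
  have hterm (m : Fin (k :: L).length → ℕ) :
      {m | Antitone m}.indicator (fun m => ∏ l, (f ((k :: L).get l) (m l) : ℝ≥0∞)) m =
        ({m | Antitone m}.indicator (fun m => ∏ l, f ((k :: L).get l) (m l)) m : ℝ≥0) := by
    by_cases hm : Antitone m <;> simp [hm]
  have h := antitoneTupleSum_cons (fun k i => (f k i : ℝ≥0∞)) k L isLowerSet_univ
  simp only [antitoneTupleSum_Iic, hnest, ← ENNReal.coe_mul, Set.indicator_univ] at h
  simp only [antitoneTupleSum, Set.mem_univ, implies_true, and_true, hterm] at h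
  have h' := congrArg ENNReal.toNNReal h
  rwa [ENNReal.tsum_toNNReal_eq fun _ => ENNReal.coe_ne_top,
    ENNReal.tsum_toNNReal_eq fun _ => ENNReal.coe_ne_top] at h'

/-! ### Generating functions of nested sums -/

theorem one_add_sum_mul_prod_inv_one_sub [Field 𝕜] {X : ℕ → 𝕜} (hX : ∀ i, X i ≠ 1) (j : ℕ) :
    1 + ∑ i ∈ range (j + 1), X i * ∏ l ∈ range (i + 1), (1 - X l)⁻¹ =
      ∏ i ∈ range (j + 1), (1 - X i)⁻¹ := by
  induction j with
  | zero =>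
    have := sub_ne_zero.2 (hX 0).symm
    simp only [zero_add, range_one, prod_inv_distrib, sum_singleton, prod_singleton]
    field_simp
    ring
  | succ j ih =>
    have := sub_ne_zero.2 (hX (j + 1)).symm
    rw [sum_range_succ, ← add_assoc, ih, prod_range_succ _ (j + 1)]
    field_simp
    ring

theorem eq_prod_inv_one_sub [Field 𝕜] {X P : ℕ → 𝕜} (hX : ∀ i, X i ≠ 1)
    (hP : ∀ j, P j = 1 + ∑ i ∈ range (j + 1), X i * P i) (j : ℕ) :
    P j = ∏ i ∈ range (j + 1), (1 - X i)⁻¹ := by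
  have hsub (i : ℕ) : 1 - X i ≠ 0 := sub_ne_zero.2 (hX i).symm
  induction j with
  | zero =>
    have h := hP 0
    simp only [zero_add, sum_range_one, prod_range_one] at h ⊢
    exact eq_inv_of_mul_eq_one_left (by linear_combination h)
  | succ j ih =>
    have h := hP (j + 1)
    rw [sum_range_succ, ← add_assoc, ← hP j] at h
    rw [prod_range_succ, ← ih, eq_mul_inv_iff_mul_eq₀ (hsub _)]
    linear_combination h

theorem exists_hasSum_nestedSum_length_le {f : ι → ℕ → ℝ} {X P : ℕ → ℝ}
    (hf₀ : ∀ k i, 0 ≤ f k i) (hf : ∀ i, HasSum (f · i) (X i)) (hP₀ : ∀ j, 0 ≤ P j)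
    (hP : ∀ j, 1 + ∑ i ∈ range (j + 1), X i * P i ≤ P j) (N j : ℕ) :
    ∃ a ≤ P j, HasSum (fun L : List ι => if L.length ≤ N then nestedSum f L j else 0) a := by
  have hX₀ (i : ℕ) : 0 ≤ X i := (hf i).nonneg (hf₀ · i)
  induction N generalizing j with
  | zero =>
    refine ⟨1, (le_add_of_nonneg_right ?_).trans (hP j), ?_⟩
    · exact sum_nonneg fun i _ => mul_nonneg (hX₀ i) (hP₀ i)
    · convert hasSum_ite_eq ([] : List ι) (1 : ℝ) using 2 with L
      cases L <;> simp [nestedSum]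
  | succ N ih =>
    choose a ha hsum using ih
    refine ⟨1 + ∑ i ∈ range (j + 1), X i * a i, le_trans ?_ (hP j), ?_⟩
    · gcongr with i
      exacts [hX₀ i, ha i]
    · have hcons := hasSum_sum_mul_of_summable_norm hf hsum (fun i => (hf i).summable.norm)
        (fun i => (hsum i).summable.norm) (range (j + 1))
      have hlen (p : ι × List ι) :
          (if (p.1 :: p.2).length ≤ N + 1 then nestedSum f (p.1 :: p.2) j else 0) =
            ∑ i ∈ range (j + 1), f p.1 i * if p.2.length ≤ N then nestedSum f p.2 i else 0 := by
        by_cases h : p.2.length ≤ N <;> simp [h, nestedSum]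
      simpa [nestedSum] using
        hasSum_list (F := fun L => if L.length ≤ N + 1 then nestedSum f L j else 0)
          (by simpa only [hlen] using hcons)

theorem summable_nestedSum_of_nonneg {f : ι → ℕ → ℝ} {X : ℕ → ℝ} (hf₀ : ∀ k i, 0 ≤ f k i)
    (hf : ∀ i, HasSum (f · i) (X i)) (hX : ∀ i, X i < 1) (j : ℕ) :
    Summable (nestedSum f · j) := by
  have hP₀ (j : ℕ) : 0 ≤ ∏ i ∈ range (j + 1), (1 - X i)⁻¹ :=
    prod_nonneg fun i _ => inv_nonneg.2 (sub_nonneg.2 (hX i).le)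
  have hP (j : ℕ) := (one_add_sum_mul_prod_inv_one_sub (fun i => (hX i).ne) j).le
  refine summable_of_sum_le (c := ∏ i ∈ range (j + 1), (1 - X i)⁻¹) (nestedSum_nonneg hf₀ · j)
    fun s => ?_
  obtain ⟨a, ha, hs⟩ :=
    exists_hasSum_nestedSum_length_le hf₀ hf hP₀ hP (s.sup List.length) j
  calc ∑ L ∈ s, nestedSum f L j
      = ∑ L ∈ s, if L.length ≤ s.sup List.length then nestedSum f L j else 0 :=
        sum_congr rfl fun L hL => (if_pos (le_sup (f := List.length) hL)).symm
    _ ≤ a := sum_le_hasSum s (fun L _ => ite_nonneg (nestedSum_nonneg hf₀ L j) le_rfl) hs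
    _ ≤ _ := ha

theorem summable_norm_nestedSum [SeminormedRing 𝕜] [NormOneClass 𝕜] {f : ι → ℕ → 𝕜} {X : ℕ → ℝ}
    (hf : ∀ i, HasSum (fun k => ‖f k i‖) (X i)) (hX : ∀ i, X i < 1) (j : ℕ) :
    Summable fun L => ‖nestedSum f L j‖ :=
  (summable_nestedSum_of_nonneg (fun _ _ => norm_nonneg _) hf hX j).of_nonneg_of_le
    (fun _ => norm_nonneg _) (norm_nestedSum_le f · j)

/-- This is the generating function of the complete homogeneous symmetric polynomials: a monotone
nested sum over all words factors as a product of geometric series. -/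
theorem hasSum_nestedSum [NormedField 𝕜] [CompleteSpace 𝕜] {f : ι → ℕ → 𝕜} {X : ℕ → ℝ}
    (hf : ∀ i, HasSum (fun k => ‖f k i‖) (X i)) (hX : ∀ i, X i < 1) (j : ℕ) :
    HasSum (nestedSum f · j) (∏ i ∈ range (j + 1), (1 - ∑' k, f k i)⁻¹) := by
  have hsum (i : ℕ) : Summable (f · i) := (hf i).summable.of_norm
  have hnest := summable_norm_nestedSum hf hX
  have hne (i : ℕ) : ∑' k, f k i ≠ 1 := fun h => by
    have := norm_tsum_le_tsum_norm (hf i).summable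
    rw [h, norm_one, (hf i).tsum_eq] at this
    exact this.not_gt (hX i)
  have hrec (j : ℕ) : ∑' L, nestedSum f L j =
      1 + ∑ i ∈ range (j + 1), (∑' k, f k i) * ∑' L, nestedSum f L i := by
    have hcons := hasSum_sum_mul_of_summable_norm (fun i => (hsum i).hasSum)
      (fun i => (hnest i).of_norm.hasSum) (fun i => (hf i).summable) hnest (range (j + 1))
    exact (hasSum_list (F := (nestedSum f · j)) hcons).tsum_eq
  rw [← eq_prod_inv_one_sub hne hrec j]
  exact (hnest j).of_norm.hasSum

theorem hasSum_tsum_mul_nestedSum [NormedField 𝕜] [CompleteSpace 𝕜] {f g : ι → ℕ → 𝕜}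
    {X Y : ℕ → ℝ} (hf : ∀ i, HasSum (fun k => ‖f k i‖) (X i)) (hX : ∀ i, X i < 1)
    (hg : ∀ i, HasSum (fun k => ‖g k i‖) (Y i))
    (hY : Summable fun i => Y i * ∏ l ∈ range (i + 1), (1 - X l)⁻¹) :
    HasSum (fun p : ι × List ι => ∑' i, g p.1 i * nestedSum f p.2 i)
      (∑' i, (∑' k, g k i) * ∏ l ∈ range (i + 1), (1 - ∑' k, f k l)⁻¹) := by
  have hnest := summable_norm_nestedSum hf hX
  have hnorm : Summable fun q : ℕ × (ι × List ι) => ‖g q.2.1 q.1 * nestedSum f q.2.2 q.1‖ := by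
    have hP (i : ℕ) : ∑' L, ‖nestedSum f L i‖ ≤ ∏ l ∈ range (i + 1), (1 - X l)⁻¹ := by
      have h := hasSum_nestedSum (f := fun k i => ‖f k i‖) (by simpa using hf) hX i
      simp only [(hf _).tsum_eq] at h
      exact ((hnest i).tsum_le_tsum (norm_nestedSum_le f · i) h.summable).trans_eq h.tsum_eq
    have hprod (i : ℕ) : HasSum (fun p : ι × List ι => ‖g p.1 i * nestedSum f p.2 i‖)
        (Y i * ∑' L, ‖nestedSum f L i‖) := by
      simpa only [norm_mul] using (hasSum_mul_of_summable_norm (hg i) (hnest i).hasSum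
        (hg i).summable.norm (hnest i).norm :)
    rw [summable_prod_of_nonneg fun _ => norm_nonneg _]
    refine ⟨fun i => (hprod i).summable, ?_⟩
    simp only [(hprod _).tsum_eq]
    have hY₀ (i : ℕ) : 0 ≤ Y i := (hg i).nonneg fun _ => norm_nonneg _
    refine hY.of_nonneg_of_le (fun i => mul_nonneg (hY₀ i) ?_) fun i => ?_
    · exact tsum_nonneg fun _ => norm_nonneg _
    · exact mul_le_mul_of_nonneg_left (hP i) (hY₀ i)
  have hfiber (i : ℕ) : HasSum (fun p : ι × List ι => g p.1 i * nestedSum f p.2 i)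
      ((∑' k, g k i) * ∏ l ∈ range (i + 1), (1 - ∑' k, f k l)⁻¹) :=
    (hasSum_mul_of_summable_norm (hg i).summable.of_norm.hasSum (hasSum_nestedSum hf hX i)
      (hg i).summable (hnest i) :)
  have hswap := (Equiv.prodComm (ι × List ι) ℕ).hasSum_iff.2 hnorm.of_norm.hasSum
  rw [(hnorm.of_norm.hasSum.prod_fiberwise hfiber).tsum_eq]
  exact hswap.prod_fiberwise fun p => (hswap.summable.prod_factor p).hasSum

/-! ### Entries of an index -/

/-- The weight of an entry `k` of an index in the generating function: every entry `1` carries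
`v`, every entry `k ≥ 2` carries `w u ^ (k - 2)`, and `0`, which is not allowed in an index,
carries `0`. -/
def entryWeight [Semiring R] (u v w : R) : ℕ → R
  | 0 => 0
  | 1 => v
  | k + 2 => w * u ^ k

/-- The weighted summand `entryWeight u v w k / (2i + 1) ^ k` contributed by an entry `k` of an
index to a multiple `t`-star value; the odd summation variable is written `2i + 1`. -/
def entryTerm [DivisionRing 𝕜] (u v w : 𝕜) (k i : ℕ) : 𝕜 :=
  entryWeight u v w k * ((2 * i + 1 : 𝕜) ^ k)⁻¹

/-- The polynomial `(x - u) (x - v) - w`. Its values at odd `x` are the numerators of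
`1 - ∑ₖ entryTerm u v w k i`, and its roots are `3 - 2α*` and `3 - 2β*`. -/
def entryQuadratic [Ring R] (u v w x : R) : R :=
  (x - u) * (x - v) - w

theorem hasSum_entryWeight_mul_inv_pow [NormedField 𝕜] {u x : 𝕜} (v w : 𝕜) (hux : ‖u‖ < ‖x‖) :
    HasSum (fun k => entryWeight u v w k * (x ^ k)⁻¹) (v / x + w / (x * (x - u))) := by
  have hx : x ≠ 0 := norm_pos_iff.1 ((norm_nonneg u).trans_lt hux)
  have hxu : x - u ≠ 0 := sub_ne_zero.2 fun h => hux.ne' (congrArg norm h)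
  have hgeom := (hasSum_geometric_of_norm_lt_one (ξ := u / x)
    (by rwa [norm_div, div_lt_one (norm_pos_iff.2 hx)])).mul_left (w / x ^ 2)
  have hterm (k : ℕ) :
      entryWeight u v w (k + 2) * (x ^ (k + 2))⁻¹ = w / x ^ 2 * (u / x) ^ k := by
    rw [entryWeight, div_pow]
    field_simp
    ring
  have htotal : v / x + w / (x * (x - u)) - ∑ k ∈ range 2, entryWeight u v w k * (x ^ k)⁻¹ =
      w / x ^ 2 * (1 - u / x)⁻¹ := by
    simp only [sum_range_succ, sum_range_zero, entryWeight]
    field_simp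
    ring
  refine (hasSum_nat_add_iff' 2).1 ?_
  rw [htotal]
  simpa only [hterm] using hgeom

section RCLike

variable [RCLike 𝕜]

theorem norm_two_mul_add_one (i : ℕ) : ‖(2 * i + 1 : 𝕜)‖ = 2 * i + 1 := by
  exact_mod_cast RCLike.norm_natCast (K := 𝕜) (2 * i + 1)

theorem norm_entryTerm (u v w : 𝕜) (k i : ℕ) :
    ‖entryTerm u v w k i‖ = entryTerm ‖u‖ ‖v‖ ‖w‖ k i := by
  rcases k with _ | _ | k <;>
    simp [entryTerm, entryWeight, norm_two_mul_add_one]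

theorem norm_lt_norm_two_mul_add_one {u : 𝕜} (hu : ‖u‖ < 1) (i : ℕ) :
    ‖u‖ < ‖(2 * i + 1 : 𝕜)‖ := by
  rw [norm_two_mul_add_one]
  linarith [(Nat.cast_nonneg i : (0 : ℝ) ≤ i)]

theorem two_mul_add_one_ne_zero (i : ℕ) : (2 * i + 1 : 𝕜) ≠ 0 := by
  exact_mod_cast (2 * i).succ_ne_zero

theorem two_mul_add_one_sub_ne_zero {u : 𝕜} (hu : ‖u‖ < 1) (i : ℕ) : (2 * i + 1 : 𝕜) - u ≠ 0 :=
  sub_ne_zero.2 fun h => (norm_lt_norm_two_mul_add_one hu i).ne' (congrArg norm h)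

theorem hasSum_entryTerm {u : 𝕜} (hu : ‖u‖ < 1) (v w : 𝕜) (i : ℕ) :
    HasSum (entryTerm u v w · i)
      (1 - entryQuadratic u v w (2 * i + 1) / ((2 * i + 1) * (2 * i + 1 - u))) := by
  have hm := two_mul_add_one_ne_zero (𝕜 := 𝕜) i
  have hmu := two_mul_add_one_sub_ne_zero hu i
  have htotal : 1 - entryQuadratic u v w (2 * i + 1) / ((2 * i + 1) * (2 * i + 1 - u)) =
      v / (2 * i + 1) + w / ((2 * i + 1) * (2 * i + 1 - u)) := by
    rw [entryQuadratic]
    field_simp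
    ring
  rw [htotal]
  exact hasSum_entryWeight_mul_inv_pow v w (norm_lt_norm_two_mul_add_one hu i)

theorem hasSum_entryTerm_zero_one {u : 𝕜} (hu : ‖u‖ < 1) (i : ℕ) :
    HasSum (entryTerm u 0 1 · i) ((2 * i + 1) * (2 * i + 1 - u))⁻¹ := by
  simpa [entryTerm] using
    hasSum_entryWeight_mul_inv_pow 0 1 (norm_lt_norm_two_mul_add_one hu i)

end RCLike

/-! ### Convergence -/

theorem summable_of_kummer {c e : ℕ → ℝ} {ε : ℝ} (hε : 0 < ε) (hc : ∀ i, 0 ≤ c i)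
    (he : ∀ i, 0 ≤ e i) (h : ∀ i, ε * c i ≤ e i * c i - e (i + 1) * c (i + 1)) : Summable c := by
  refine summable_of_sum_range_le (c := e 0 * c 0 / ε) hc fun n => ?_
  rw [le_div_iff₀' hε, mul_sum]
  calc ∑ i ∈ range n, ε * c i ≤ ∑ i ∈ range n, (e i * c i - e (i + 1) * c (i + 1)) :=
        sum_le_sum fun i _ => h i
    _ = e 0 * c 0 - e n * c n := sum_range_sub' (fun i => e i * c i) n
    _ ≤ e 0 * c 0 := sub_le_self _ (mul_nonneg (he n) (hc n))

theorem entryQuadratic_pos {u v w x : ℝ} (hu : u < 1) (hw₀ : 0 ≤ w) (hw : w < (1 - u) * (1 - v))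
    (hx : 1 ≤ x) : 0 < entryQuadratic u v w x := by
  have hv : 0 < 1 - v := pos_of_mul_pos_right (hw₀.trans_lt hw) (sub_nonneg.2 hu.le)
  have : (1 - u) * (1 - v) ≤ (x - u) * (x - v) := by gcongr; linarith
  rw [entryQuadratic]
  linarith

theorem sub_mul_div_entryQuadratic_ge {u v w x : ℝ} (hu₀ : 0 ≤ u) (hu : u < 1) (hw₀ : 0 ≤ w)
    (hw : w < (1 - u) * (1 - v)) (hx : 1 ≤ x) :
    (1 - u) / 3 ≤ x - u - (x + 2 - u) * (x * (x - u) / entryQuadratic u v w (x + 2)) := by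
  have hv : 0 < 1 - v := pos_of_mul_pos_right (hw₀.trans_lt hw) (sub_nonneg.2 hu.le)
  have hq : (x + 1) * (x + 2 - u) ≤ entryQuadratic u v w (x + 2) := by
    have : (1 - u) * (1 - v) ≤ (x + 2 - u) * (1 - v) := by gcongr; linarith
    rw [entryQuadratic]
    linarith
  have hxu : x * (x - u) ≤ (x - u - (1 - u) / 3) * (x + 1) := by
    nlinarith [mul_nonneg hu₀ (sub_nonneg.2 hx)]
  rw [le_sub_comm, mul_div_assoc', div_le_iff₀ (entryQuadratic_pos hu hw₀ hw (by linarith))]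
  calc (x + 2 - u) * (x * (x - u))
      ≤ (x + 2 - u) * ((x - u - (1 - u) / 3) * (x + 1)) := by gcongr; linarith
    _ = (x - u - (1 - u) / 3) * ((x + 1) * (x + 2 - u)) := by ring
    _ ≤ _ := by gcongr; linarith

theorem summable_prod_div_entryQuadratic {u v w : ℝ} (hu₀ : 0 ≤ u) (hu : u < 1) (hw₀ : 0 ≤ w)
    (hw : w < (1 - u) * (1 - v)) :
    Summable fun i => ∏ l ∈ range i,
      ((2 * l + 1) * (2 * l + 1 - u)) / entryQuadratic u v w (2 * (l + 1 : ℕ) + 1) := by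
  have hq (i : ℕ) : 0 < entryQuadratic u v w (2 * (i + 1 : ℕ) + 1) :=
    entryQuadratic_pos hu hw₀ hw (by linarith [(Nat.cast_nonneg (i + 1) : (0 : ℝ) ≤ _)])
  have hmu (i : ℕ) : 0 < (2 * i + 1 : ℝ) - u := by
    linarith [(Nat.cast_nonneg i : (0 : ℝ) ≤ i)]
  have hc (i : ℕ) : 0 ≤ ∏ l ∈ range i,
      ((2 * l + 1) * (2 * l + 1 - u)) / entryQuadratic u v w (2 * (l + 1 : ℕ) + 1) :=
    prod_nonneg fun l _ => div_nonneg (mul_nonneg (by positivity) (hmu l).le) (hq l).le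
  refine summable_of_kummer (ε := (1 - u) / 3) (e := fun i => 2 * i + 1 - u) (by linarith)
    hc (fun i => (hmu i).le) fun i => ?_
  have hratio := sub_mul_div_entryQuadratic_ge (x := 2 * i + 1) hu₀ hu hw₀ hw
    (by linarith [(Nat.cast_nonneg i : (0 : ℝ) ≤ i)])
  have hsucc : (2 * (i + 1 : ℕ) + 1 : ℝ) = 2 * i + 1 + 2 := by push_cast; ring
  rw [prod_range_succ, hsucc]
  linear_combination mul_le_mul_of_nonneg_left hratio (hc i)

theorem inv_mul_prod_inv_div [Field 𝕜] {a b : ℕ → 𝕜} (ha : ∀ i, a i ≠ 0) (i : ℕ) :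
    (a i)⁻¹ * ∏ l ∈ range (i + 1), (b l / a l)⁻¹ =
      (b 0)⁻¹ * ∏ l ∈ range i, a l / b (l + 1) := by
  have hprod : ∏ l ∈ range i, a l ≠ 0 := prod_ne_zero_iff.2 fun l _ => ha l
  have hi := ha i
  simp only [inv_div, prod_div_distrib]
  rw [prod_range_succ, prod_range_succ' b]
  field_simp

theorem tsum_entryTerm_mul_prod_inv_one_sub [RCLike 𝕜] {u : 𝕜} (hu : ‖u‖ < 1) (v w : 𝕜) (i : ℕ) :
    (∑' k, entryTerm u 0 1 k i) * ∏ l ∈ range (i + 1), (1 - ∑' k, entryTerm u v w k l)⁻¹ =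
      (entryQuadratic u v w 1)⁻¹ * ∏ l ∈ range i,
        ((2 * l + 1) * (2 * l + 1 - u)) / entryQuadratic u v w (2 * (l + 1 : ℕ) + 1) := by
  have h := inv_mul_prod_inv_div (a := fun l : ℕ => (2 * l + 1) * (2 * l + 1 - u))
    (b := fun l : ℕ => entryQuadratic u v w (2 * l + 1))
    (fun l => mul_ne_zero (two_mul_add_one_ne_zero l) (two_mul_add_one_sub_ne_zero hu l)) i
  simpa [(hasSum_entryTerm hu v w _).tsum_eq, (hasSum_entryTerm_zero_one hu _).tsum_eq] using h

/-- The leading entry contributes `entryTerm u 0 1`, which vanishes for entries smaller than `2`: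
this singles out the admissible indices. -/
theorem hasSum_tsum_entryTerm_mul_nestedSum [RCLike 𝕜] {u v w : 𝕜} (hu : ‖u‖ < 1)
    (hw : ‖w‖ < (1 - ‖u‖) * (1 - ‖v‖)) :
    HasSum (fun p : ℕ × List ℕ =>
        ∑' i, entryTerm u 0 1 p.1 i * nestedSum (entryTerm u v w) p.2 i)
      ((entryQuadratic u v w 1)⁻¹ * ∑' i, ∏ l ∈ range i,
        ((2 * l + 1) * (2 * l + 1 - u)) / entryQuadratic u v w (2 * (l + 1 : ℕ) + 1)) := by
  have hu' : ‖(‖u‖ : ℝ)‖ < 1 := by rwa [norm_norm]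
  have hlt (i : ℕ) : ∑' k, entryTerm ‖u‖ ‖v‖ ‖w‖ k i < 1 := by
    have hi : (1 : ℝ) ≤ 2 * i + 1 := by linarith [(Nat.cast_nonneg i : (0 : ℝ) ≤ i)]
    have := entryQuadratic_pos hu (norm_nonneg w) hw hi
    have : 0 < 2 * i + 1 - ‖u‖ := by linarith
    rw [(hasSum_entryTerm hu' ‖v‖ ‖w‖ i).tsum_eq]
    exact sub_lt_self _ (by positivity)
  have hsum : Summable fun i => (∑' k, entryTerm ‖u‖ 0 1 k i) *
      ∏ l ∈ range (i + 1), (1 - ∑' k, entryTerm ‖u‖ ‖v‖ ‖w‖ k l)⁻¹ := by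
    simp only [tsum_entryTerm_mul_prod_inv_one_sub hu']
    exact (summable_prod_div_entryQuadratic (norm_nonneg u) hu (norm_nonneg w) hw).mul_left _
  have hnorm (i : ℕ) : HasSum (fun k => ‖entryTerm u v w k i‖)
      (∑' k, entryTerm ‖u‖ ‖v‖ ‖w‖ k i) := by
    simpa only [norm_entryTerm] using (hasSum_entryTerm hu' ‖v‖ ‖w‖ i).summable.hasSum
  have hnorm_lead (i : ℕ) : HasSum (fun k => ‖entryTerm u 0 1 k i‖)
      (∑' k, entryTerm ‖u‖ 0 1 k i) := by
    simpa only [norm_entryTerm, norm_zero, norm_one] using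
      (hasSum_entryTerm_zero_one hu' i).summable.hasSum
  simpa only [tsum_entryTerm_mul_prod_inv_one_sub hu, tsum_mul_left] using
    hasSum_tsum_mul_nestedSum hnorm hlt hnorm_lead hsum

/-! ### Multiple `t`-star values -/

theorem multTStar_cons (k : ℕ) (K : List ℕ) :
    multTStar (k :: K) =
      ∑' i : ℕ, ((2 * i + 1 : ℝ) ^ k)⁻¹ * nestedSum (fun k i => ((2 * i + 1 : ℝ) ^ k)⁻¹) K i := by
  have hinj : Function.Injective fun (m : Fin (k :: K).length → ℕ) l => 2 * m l + 1 :=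
    fun m m' h => funext fun l => by simpa using congrFun h l
  have htsum := congrArg NNReal.toReal
    (tsum_antitone_prod_cons (fun k i => ((2 * i + 1 : ℝ≥0) ^ k)⁻¹) k K)
  have hnest (i : ℕ) : (nestedSum (fun k i => ((2 * i + 1 : ℝ≥0) ^ k)⁻¹) K i : ℝ≥0) =
      nestedSum (fun k i => ((2 * i + 1 : ℝ) ^ k)⁻¹) K i := by
    simpa using map_nestedSum NNReal.toRealHom (fun k i => ((2 * i + 1 : ℝ≥0) ^ k)⁻¹) K i
  have hodd : Function.support (fun m : Fin (k :: K).length → ℕ =>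
      if (∀ i, Odd (m i)) ∧ ∀ i j, i < j → m j ≤ m i then
        ∏ i, ((m i : ℝ) ^ (k :: K).get i)⁻¹ else 0) ⊆
      Set.range fun (m : Fin (k :: K).length → ℕ) l => 2 * m l + 1 := fun m hm => by
    choose c hc using (ite_ne_right_iff.1 (Function.mem_support.1 hm)).1.1
    exact ⟨c, funext fun l => (hc l).symm⟩
  have hanti (m : Fin (k :: K).length → ℕ) :
      ((∀ i, Odd (2 * m i + 1)) ∧ ∀ i j, i < j → 2 * m j + 1 ≤ 2 * m i + 1) ↔ Antitone m := by
    simp [antitone_iff_forall_lt]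
  rw [multTStar, ← hinj.tsum_eq hodd]
  simp only [hanti]
  simp only [NNReal.coe_tsum, NNReal.coe_mul] at htsum
  convert htsum using 3 with m i
  · by_cases hm : Antitone m <;> simp [hm]
  · simp [hnest]

/-- The monomial that an index `K` carries in the generating function: it is
`u ^ (weight - depth - height) * v ^ (depth - height) * w ^ (height - 1)` if `K` is admissible
and `0` otherwise. The leading entry is at least `2`, and contributes no factor `w`. -/
def indexWeight [Semiring R] (u v w : R) : List ℕ → R
  | [] => 0
  | k :: K => entryWeight u 0 1 k * (K.map (entryWeight u v w)).prod

theorem tsum_entryTerm_mul_nestedSum [RCLike 𝕜] (u v w : 𝕜) (k : ℕ) (K : List ℕ) :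
    ∑' i, entryTerm u 0 1 k i * nestedSum (entryTerm u v w) K i =
      indexWeight u v w (k :: K) * (multTStar (k :: K) : 𝕜) := by
  have hcast (i : ℕ) : nestedSum (fun k i => ((2 * i + 1 : 𝕜) ^ k)⁻¹) K i =
      (nestedSum (fun k i => ((2 * i + 1 : ℝ) ^ k)⁻¹) K i : ℝ) := by
    simpa [map_ofNat] using
      (map_nestedSum (algebraMap ℝ 𝕜) (fun k i => ((2 * i + 1 : ℝ) ^ k)⁻¹) K i).symm
  have hweight (i : ℕ) : nestedSum (entryTerm u v w) K i = (K.map (entryWeight u v w)).prod *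
      (nestedSum (fun k i => ((2 * i + 1 : ℝ) ^ k)⁻¹) K i : ℝ) := by
    rw [← hcast, ← nestedSum_mul_left]
    rfl
  simp only [multTStar_cons, RCLike.ofReal_tsum, indexWeight, ← tsum_mul_left]
  refine tsum_congr fun i => ?_
  rw [hweight, entryTerm]
  push_cast
  ring

theorem hasSum_indexWeight_mul_multTStar [RCLike 𝕜] {u v w : 𝕜} (hu : ‖u‖ < 1)
    (hw : ‖w‖ < (1 - ‖u‖) * (1 - ‖v‖)) :
    HasSum (fun K => indexWeight u v w K * (multTStar K : 𝕜))
      ((entryQuadratic u v w 1)⁻¹ * ∑' i, ∏ l ∈ range i,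
        ((2 * l + 1) * (2 * l + 1 - u)) / entryQuadratic u v w (2 * (l + 1 : ℕ) + 1)) := by
  have h := hasSum_tsum_entryTerm_mul_nestedSum hu hw
  simp only [tsum_entryTerm_mul_nestedSum] at h
  simpa [indexWeight] using hasSum_list (F := fun K => indexWeight u v w K * (multTStar K : 𝕜)) h

/-! ### Grouping by weight, depth and height -/

/-- The height of an index, in the form used by `G0hStar`. -/
abbrev height (K : List ℕ) : ℕ :=
  K.countP fun i => decide (2 ≤ i)

/-- The exponents `(weight - depth - height, depth - height, height - 1)` of the monomial of an
index. The subtractions are truncated, but exact for admissible indices. -/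
def indexExponents (K : List ℕ) : ℕ × ℕ × ℕ :=
  (K.sum - K.length - height K, K.length - height K, height K - 1)

theorem length_add_height_le_sum {K : List ℕ} (hK : ∀ k ∈ K, 1 ≤ k) :
    K.length + height K ≤ K.sum := by
  induction K with
  | nil => simp
  | cons k K ih =>
    rw [List.forall_mem_cons] at hK
    have := ih hK.2
    simp only [List.length_cons, List.countP_cons, List.sum_cons, decide_eq_true_eq]
    split_ifs <;> lia

theorem prod_map_entryWeight [CommSemiring R] (u v w : R) {K : List ℕ} (hK : ∀ k ∈ K, 1 ≤ k) :
    (K.map (entryWeight u v w)).prod =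
      u ^ (K.sum - K.length - height K) * v ^ (K.length - height K) * w ^ height K := by
  induction K with
  | nil => simp
  | cons k K ih =>
    rw [List.forall_mem_cons] at hK
    have hle := length_add_height_le_sum hK.2
    have hheight : height K ≤ K.length := List.countP_le_length
    obtain rfl | ⟨k, rfl⟩ : k = 1 ∨ ∃ l, k = l + 2 := by
      rcases hK.1.eq_or_lt with h | h
      exacts [.inl h.symm, .inr ⟨k - 2, by lia⟩]
    · have hu : 1 + K.sum - (K.length + 1) - height K = K.sum - K.length - height K := by lia
      have hv : K.length + 1 - height K = K.length - height K + 1 := by lia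
      simp only [List.map_cons, entryWeight, List.prod_cons, ih hK.2, List.sum_cons,
        List.length_cons, Nat.not_ofNat_le_one, decide_false, Bool.false_eq_true,
        not_false_eq_true, List.countP_cons_of_neg, hu, hv]
      ring
    · have hu : k + 2 + K.sum - (K.length + 1) - (height K + 1) =
          K.sum - K.length - height K + k := by lia
      simp only [List.map_cons, entryWeight, List.prod_cons, ih hK.2, List.sum_cons,
        List.length_cons, le_add_iff_nonneg_left, zero_le, decide_true,
        List.countP_cons_of_pos, hu, Nat.add_sub_add_right]
      ring

theorem exists_eq_cons_of_admissible {K : List ℕ} (hK : Admissible K) :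
    ∃ k L, K = (k + 2) :: L ∧ ∀ l ∈ L, 1 ≤ l := by
  rcases K with _ | ⟨k, L⟩
  · exact absurd hK.2 (by simp)
  · obtain ⟨l, rfl⟩ : ∃ l, k = 2 + l := Nat.exists_eq_add_of_le hK.2
    exact ⟨l, L, by rw [add_comm], fun l hl => hK.1 l (List.mem_cons_of_mem _ hl)⟩

theorem indexWeight_of_admissible [CommSemiring R] (u v w : R) {K : List ℕ} (hK : Admissible K) :
    indexWeight u v w K =
      u ^ (indexExponents K).1 * v ^ (indexExponents K).2.1 * w ^ (indexExponents K).2.2 := by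
  obtain ⟨k, L, rfl, hL⟩ := exists_eq_cons_of_admissible hK
  have hle := length_add_height_le_sum hL
  have hu : k + 2 + L.sum - (L.length + 1) - (height L + 1) =
      k + (L.sum - L.length - height L) := by lia
  simp [indexWeight, indexExponents, entryWeight, prod_map_entryWeight u v w hL, hu, pow_add,
    mul_assoc]

theorem indexWeight_of_not_admissible [CommSemiring R] (u v w : R) {K : List ℕ}
    (hK : ¬Admissible K) : indexWeight u v w K = 0 := by
  rcases K with _ | ⟨_ | _ | k, L⟩
  · rfl
  · simp [indexWeight, entryWeight]
  · simp [indexWeight, entryWeight]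
  · have hzero : 0 ∈ L := by simpa [Admissible, Nat.one_le_iff_ne_zero] using hK
    rw [indexWeight, List.prod_eq_zero (List.mem_map.2 ⟨0, hzero, rfl⟩), mul_zero]

theorem indexExponents_eq_iff {K : List ℕ} (hK : Admissible K) (p : ℕ × ℕ × ℕ) :
    indexExponents K = p ↔ K.sum = p.1 + p.2.1 + 2 * p.2.2 + 2 ∧
      K.length = p.2.1 + p.2.2 + 1 ∧ height K = p.2.2 + 1 := by
  have hle := length_add_height_le_sum hK.1
  have hheight : height K ≤ K.length := List.countP_le_length
  have hpos : 0 < height K := by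
    obtain ⟨k, L, rfl, -⟩ := exists_eq_cons_of_admissible hK
    simp [height]
  simp only [indexExponents, Prod.ext_iff]
  lia

theorem tsum_fiber_indexWeight_mul_multTStar [RCLike 𝕜] (u v w : 𝕜) (p : ℕ × ℕ × ℕ) :
    ∑' K : indexExponents ⁻¹' {p}, indexWeight u v w K * (multTStar K : 𝕜) =
      (G0hStar (p.1 + p.2.1 + 2 * p.2.2 + 2) (p.2.1 + p.2.2 + 1) (p.2.2 + 1) : 𝕜) *
        u ^ p.1 * v ^ p.2.1 * w ^ p.2.2 := by
  rw [tsum_subtype (indexExponents ⁻¹' {p}) fun K => indexWeight u v w K * (multTStar K : 𝕜)]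
  simp only [G0hStar, RCLike.ofReal_tsum, ← tsum_mul_right]
  refine tsum_congr fun K => ?_
  by_cases hK : Admissible K
  · simp only [← indexExponents_eq_iff hK p]
    by_cases hp : indexExponents K = p
    · simp only [Set.mem_preimage, hp, Set.mem_singleton_iff, Set.indicator_of_mem, hK,
        indexWeight_of_admissible, and_self, ↓reduceIte]
      ring
    · simp [hp]
  · simp [hK, indexWeight_of_not_admissible]

theorem hasSum_G0hStar_mul_pow [RCLike 𝕜] {u v w : 𝕜} (hu : ‖u‖ < 1)
    (hw : ‖w‖ < (1 - ‖u‖) * (1 - ‖v‖)) :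
    HasSum (fun p : ℕ × ℕ × ℕ =>
        (G0hStar (p.1 + p.2.1 + 2 * p.2.2 + 2) (p.2.1 + p.2.2 + 1) (p.2.2 + 1) : 𝕜) *
          u ^ p.1 * v ^ p.2.1 * w ^ p.2.2)
      ((entryQuadratic u v w 1)⁻¹ * ∑' i, ∏ l ∈ range i,
        ((2 * l + 1) * (2 * l + 1 - u)) / entryQuadratic u v w (2 * (l + 1 : ℕ) + 1)) := by
  simpa only [tsum_fiber_indexWeight_mul_multTStar] using
    (hasSum_indexWeight_mul_multTStar hu hw).tsum_fiberwise indexExponents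

/-! ### The hypergeometric series -/

theorem entryQuadratic_two_mul_add_three {u v w α β : ℂ} (hadd : α + β = 3 - u / 2 - v / 2)
    (hmul : α * β = (9 - 3 * u - 3 * v + u * v - w) / 4) (x : ℂ) :
    entryQuadratic u v w (2 * x + 3) = 4 * ((α + x) * (β + x)) := by
  rw [entryQuadratic]
  linear_combination -4 * hmul - 4 * x * hadd

theorem hyp3F2_one_right_one (a b d e : ℂ) :
    hyp3F2 a b 1 d e 1 = ∑' n, ∏ l ∈ range n, ((a + l) * (b + l)) / ((d + l) * (e + l)) := by
  refine tsum_congr fun n => ?_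
  have hfact : poch 1 n = n.factorial := by
    rw [← prod_range_add_one_eq_factorial, poch]
    push_cast
    simp only [add_comm]
  have hn : (n.factorial : ℂ) ≠ 0 := Nat.cast_ne_zero.2 n.factorial_ne_zero
  rw [hfact, one_pow]
  simp only [poch, prod_div_distrib, prod_mul_distrib]
  field_simp

theorem hyp3F2_eq_tsum_prod_div_entryQuadratic {u v w α β : ℂ} (hadd : α + β = 3 - u / 2 - v / 2)
    (hmul : α * β = (9 - 3 * u - 3 * v + u * v - w) / 4) :
    hyp3F2 ((1 - u) / 2) (1 / 2) 1 α β 1 = ∑' i, ∏ l ∈ range i,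
      ((2 * l + 1) * (2 * l + 1 - u)) / entryQuadratic u v w (2 * (l + 1 : ℕ) + 1) := by
  rw [hyp3F2_one_right_one]
  refine tsum_congr fun n => prod_congr rfl fun l _ => ?_
  have hl : (2 * (l + 1 : ℕ) + 1 : ℂ) = 2 * l + 3 := by push_cast; ring
  have hnum : ((1 - u) / 2 + l) * (1 / 2 + l) = (2 * l + 1) * (2 * l + 1 - u) / 4 := by ring
  rw [hl, hnum, entryQuadratic_two_mul_add_three hadd hmul, div_div]

end OhnoZagier

theorem ohno_zagier_multiple_t_star_general {u v w : ℂ} (hu : ‖u‖ < 1)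
    (hw : ‖w‖ < (1 - ‖u‖) * (1 - ‖v‖)) {αs βs : ℂ} (hadd : αs + βs = 3 - u / 2 - v / 2)
    (hmul : αs * βs = (9 - 3 * u - 3 * v + u * v - w) / 4) :
    HasSum (fun p : ℕ × ℕ × ℕ =>
        (G0hStar (p.1 + p.2.1 + 2 * p.2.2 + 2) (p.2.1 + p.2.2 + 1) (p.2.2 + 1) : ℂ) *
          u ^ p.1 * v ^ p.2.1 * w ^ p.2.2)
      ((1 - u - v + u * v - w)⁻¹ * hyp3F2 ((1 - u) / 2) (1 / 2) 1 αs βs 1) := by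
  have hone : 1 - u - v + u * v - w = OhnoZagier.entryQuadratic u v w 1 := by
    rw [OhnoZagier.entryQuadratic]
    ring
  rw [hone, OhnoZagier.hyp3F2_eq_tsum_prod_div_entryQuadratic hadd hmul]
  exact OhnoZagier.hasSum_G0hStar_mul_pow hu hw

/-- Ohno–Zagier type relation for multiple `t`-star values (Theorem 1.2):
the generating function of the sums `G₀*(k,n,s)` of multiple `t`-star values of fixed
weight `k`, depth `n` and height `s` equals
`(1/(1-u-v+uv-w)) ⬝ ₃F₂((1-u)/2, 1/2, 1; α*, β*; 1)` where
`α* + β* = 3 - u/2 - v/2` and `α*β* = (9 - 3u - 3v + uv - w)/4`. -/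
theorem ohno_zagier_multiple_t_star :
    ∃ δ > (0 : ℝ), ∀ u v w : ℝ, |u| < δ → |v| < δ → |w| < δ →
      Summable (fun p : ℕ × ℕ × ℕ =>
        G0hStar (p.1 + p.2.1 + 2 * p.2.2 + 2) (p.2.1 + p.2.2 + 1) (p.2.2 + 1)
          * u ^ p.1 * v ^ p.2.1 * w ^ p.2.2) ∧
      ∀ αs βs : ℂ, αs + βs = 3 - (u : ℂ) / 2 - (v : ℂ) / 2 →
        αs * βs = (9 - 3 * (u : ℂ) - 3 * (v : ℂ) + (u : ℂ) * (v : ℂ) - (w : ℂ)) / 4 →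
        ((∑' p : ℕ × ℕ × ℕ,
            G0hStar (p.1 + p.2.1 + 2 * p.2.2 + 2) (p.2.1 + p.2.2 + 1) (p.2.2 + 1)
              * u ^ p.1 * v ^ p.2.1 * w ^ p.2.2) : ℂ)
          = (1 - (u : ℂ) - (v : ℂ) + (u : ℂ) * (v : ℂ) - (w : ℂ))⁻¹
              * hyp3F2 ((1 - (u : ℂ)) / 2) (1 / 2) 1 αs βs 1 := by
  refine ⟨1 / 3, by norm_num, fun u v w hu hv hw => ?_⟩
  have hu₁ : |u| < 1 := by linarith
  have hw₁ : |w| < (1 - |u|) * (1 - |v|) := by nlinarith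
  refine ⟨(OhnoZagier.hasSum_G0hStar_mul_pow hu₁ hw₁).summable, fun αs βs hadd hmul => ?_⟩
  refine (ohno_zagier_multiple_t_star_general ?_ ?_ hadd hmul).tsum_eq
  · rwa [Complex.norm_real]
  · simpa only [Complex.norm_real, Real.norm_eq_abs] using hw₁
end
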